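/- Let M be a Morse gauge and let G = ⟨S|R⟩ be a C'(1/6) group whose Cayley graph Cay(G,S) satisfies the geodesic MLTG property. Then there exists a scale L such that for each integer N ≥ 2 there exists a constant D with the following property: if r ∈ R is a relator and w is a subword of r such that |w| ≥ |r|/N and some edge path in Cay(G,S) labelled by w is L-locally M-Morse, then |r| ≤ D. -/

import Mathlib

open Metric Set Filter

namespace MorseLTG

/-- A Morse gauge: a non-decreasing continuous function `[1, ∞) → [0, ∞)`. -/
def IsMorseGauge (M : ℝ → ℝ) : Prop :=
  MonotoneOn M (Set.Ici 1) ∧ ContinuousOn M (Set.Ici 1) ∧ ∀ t : ℝ, 1 ≤ t → 0 ≤ M t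

section Space

variable {X : Type*} [MetricSpace X]

/-- `γ` is a `Q`-quasi-geodesic on the set `I ⊆ ℝ`. -/
def QGeoOn (Q : ℝ) (I : Set ℝ) (γ : ℝ → X) : Prop :=
  ContinuousOn γ I ∧ ∀ s ∈ I, ∀ t ∈ I,
    |t - s| / Q - Q ≤ dist (γ s) (γ t) ∧ dist (γ s) (γ t) ≤ Q * |t - s| + Q

/-- `γ` is `M`-Morse on `I`: every `Q`-quasi-geodesic with endpoints on `γ|_I`
stays in the closed `M Q`-neighbourhood of the corresponding subsegment of `γ`. -/
def MorseOn (M : ℝ → ℝ) (I : Set ℝ) (γ : ℝ → X) : Prop :=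
  ∀ Q : ℝ, 1 ≤ Q → ∀ s ∈ I, ∀ t ∈ I, s ≤ t →
    ∀ (lam : ℝ → X) (a b : ℝ), a ≤ b → QGeoOn Q (Set.Icc a b) lam →
      lam a = γ s → lam b = γ t →
      ∀ u ∈ Set.Icc a b, ∃ v ∈ Set.Icc s t, dist (lam u) (γ v) ≤ M Q

/-- `γ` is a geodesic on `I` (an isometric embedding). -/
def GeodesicOn (I : Set ℝ) (γ : ℝ → X) : Prop :=
  ∀ s ∈ I, ∀ t ∈ I, dist (γ s) (γ t) = |t - s|

/-- A geodesic ray based at `x₀`. -/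
def GeodesicRayFrom (x₀ : X) (γ : ℝ → X) : Prop :=
  γ 0 = x₀ ∧ GeodesicOn (Set.Ici 0) γ

/-- A Morse geodesic ray (based anywhere). -/
def IsMorseGeodesicRay (γ : ℝ → X) : Prop :=
  GeodesicOn (Set.Ici 0) γ ∧ ∃ M : ℝ → ℝ, IsMorseGauge M ∧ MorseOn M (Set.Ici 0) γ

/-- `p` is `L`-locally an `M`-Morse `Q`-quasi-geodesic on `I`. -/
def LocMorseQGeoOn (Q : ℝ) (M : ℝ → ℝ) (L : ℝ) (I : Set ℝ) (p : ℝ → X) : Prop :=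
  ∀ s ∈ I, ∀ t ∈ I, s ≤ t → t - s ≤ L →
    QGeoOn Q (Set.Icc s t) p ∧ MorseOn M (Set.Icc s t) p

/-- `p` is `L`-locally `M`-Morse on `I`. -/
def LocMorseOn (M : ℝ → ℝ) (L : ℝ) (I : Set ℝ) (p : ℝ → X) : Prop :=
  ∀ s ∈ I, ∀ t ∈ I, s ≤ t → t - s ≤ L → MorseOn M (Set.Icc s t) p

/-- The Morse local-to-global property for a geodesic metric space. -/
def MLTG (X : Type*) [MetricSpace X] : Prop :=
  ∀ Q : ℝ, 1 ≤ Q → ∀ M : ℝ → ℝ, IsMorseGauge M →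
    ∃ (L Q' : ℝ) (M' : ℝ → ℝ), 0 < L ∧ 1 ≤ Q' ∧ IsMorseGauge M' ∧
      ∀ I : Set ℝ, I.OrdConnected → ∀ p : ℝ → X,
        LocMorseQGeoOn Q M L I p → QGeoOn Q' I p ∧ MorseOn M' I p

/-- `X` is a geodesic metric space. -/
def GeodesicSpace (X : Type*) [MetricSpace X] : Prop :=
  ∀ x y : X, ∃ γ : ℝ → X, γ 0 = x ∧ γ (dist x y) = y ∧
    GeodesicOn (Set.Icc 0 (dist x y)) γ

/-- Gromov hyperbolicity via thin geodesic triangles. -/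
def GromovHyperbolic (X : Type*) [MetricSpace X] : Prop :=
  ∃ δ : ℝ, 0 ≤ δ ∧
    ∀ (γ₁ γ₂ γ₃ : ℝ → X) (a₁ b₁ a₂ b₂ a₃ b₃ : ℝ),
      GeodesicOn (Set.Icc a₁ b₁) γ₁ → GeodesicOn (Set.Icc a₂ b₂) γ₂ →
        GeodesicOn (Set.Icc a₃ b₃) γ₃ →
      γ₁ b₁ = γ₂ a₂ → γ₂ b₂ = γ₃ a₃ → γ₃ b₃ = γ₁ a₁ →
      ∀ s ∈ Set.Icc a₁ b₁,
        ∃ p ∈ γ₂ '' Set.Icc a₂ b₂ ∪ γ₃ '' Set.Icc a₃ b₃, dist (γ₁ s) p ≤ δ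

/-- The set of closest-point projections of `x` to `A`. -/
def projSet (A : Set X) (x : X) : Set X :=
  {y ∈ A | ∀ z ∈ A, dist x y ≤ dist x z}

/-- A subset `A` is `C`-contracting. -/
def ContractingSet (C : ℝ) (A : Set X) : Prop :=
  ∀ x : X, Metric.diam (⋃ y ∈ Metric.ball x (Metric.infDist x A), projSet A y) ≤ C

/-- `γ` is a `C`-contracting geodesic on `I`. -/
def ContractingOn (C : ℝ) (I : Set ℝ) (γ : ℝ → X) : Prop :=
  GeodesicOn I γ ∧ ContractingSet C (γ '' I)

/-- The Morse boundary of `X` (with basepoint `x₀`) is σ-compact. -/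
def SigmaCompactMorseBoundary (x₀ : X) : Prop :=
  ∃ Ms : ℕ → ℝ → ℝ, (∀ n, IsMorseGauge (Ms n)) ∧
    ∀ γ : ℝ → X, GeodesicRayFrom x₀ γ → ∀ M : ℝ → ℝ, IsMorseGauge M →
      MorseOn M (Set.Ici 0) γ → ∃ n, MorseOn (Ms n) (Set.Ici 0) γ

/-- `Ms` is a strong exhaustion of the Morse boundary of `X` based at `x₀`. -/
def IsStrongExhaustion (x₀ : X) (Ms : ℕ → ℝ → ℝ) : Prop :=
  (∀ n, IsMorseGauge (Ms n)) ∧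
  (∀ γ : ℝ → X, GeodesicRayFrom x₀ γ → ∀ M : ℝ → ℝ, IsMorseGauge M →
    MorseOn M (Set.Ici 0) γ → ∃ n, MorseOn (Ms n) (Set.Ici 0) γ) ∧
  (∀ M : ℝ → ℝ, IsMorseGauge M → ∃ n, ∀ γ : ℝ → X, GeodesicRayFrom x₀ γ →
    MorseOn M (Set.Ici 0) γ → MorseOn (Ms n) (Set.Ici 0) γ)

/-- The Morse boundary of `X` (with basepoint `x₀`) is strongly σ-compact. -/
def StronglySigmaCompactMorseBoundary (x₀ : X) : Prop :=
  ∃ Ms : ℕ → ℝ → ℝ, IsStrongExhaustion x₀ Ms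

end Space

section Action

variable {G : Type*} [Group G] {X : Type*} [MetricSpace X]

/-- `φ` is an action of `G` on `X` by isometries. -/
def IsIsometricAction (φ : G → X → X) : Prop :=
  (∀ x : X, φ 1 x = x) ∧ (∀ g h : G, ∀ x : X, φ (g * h) x = φ g (φ h x)) ∧
    ∀ g : G, Isometry (φ g)

/-- `φ` is a geometric (proper and cocompact, isometric) action of `G` on `X`. -/
def IsGeometricAction (φ : G → X → X) : Prop :=
  IsIsometricAction φ ∧
  (∀ (x : X) (r : ℝ), {g : G | dist x (φ g x) ≤ r}.Finite) ∧
  (∃ (x₀ : X) (r : ℝ), ∀ y : X, ∃ g : G, dist y (φ g x₀) ≤ r)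

end Action

/-- `G` has contraction: it acts geometrically on some geodesic metric space
containing a strongly contracting geodesic ray. -/
def HasContraction (G : Type*) [Group G] : Prop :=
  ∃ (X : Type) (m : MetricSpace X), ∃ φ : G → X → X,
    letI := m
    IsGeometricAction φ ∧ GeodesicSpace X ∧
      ∃ (γ : ℝ → X) (C : ℝ), 0 ≤ C ∧ GeodesicOn (Set.Ici 0) γ ∧
        ContractingSet C (γ '' Set.Ici 0)

section Horo

variable {X : Type*} [MetricSpace X]

/-- The horofunction associated to a geodesic ray `γ` based at `x₀`
(for geodesic rays, the infimum below equals the limit of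
`t ↦ d(z, γ t) - d(x₀, γ t)` as `t → ∞`, since this function is non-increasing
and bounded below). -/
noncomputable def horofn (x₀ : X) (γ : ℝ → X) (z : X) : ℝ :=
  sInf ((fun t => dist z (γ t) - dist x₀ (γ t)) '' Set.Ici 0)

/-- The horofunction map `y ↦ ρ_y = d(·, y) - d(x₀, y)`. -/
noncomputable def horomap (x₀ y : X) : ContinuousMap X ℝ :=
  ⟨fun z => dist z y - dist x₀ y, by fun_prop⟩

end Horo

section HoroAction

variable {G : Type*} [Group G] {X : Type*} [MetricSpace X]

/-- The `G`-action on the horofunction compactification: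
`(g · f)(z) = f (g⁻¹ z) - f (g⁻¹ x₀)`. -/
noncomputable def horoAction (φ : G → X → X) (hc : ∀ g : G, Continuous (φ g)) (x₀ : X)
    (g : G) (f : ContinuousMap X ℝ) : ContinuousMap X ℝ :=
  ⟨fun z => f (φ g⁻¹ z) - f (φ g⁻¹ x₀), (f.continuous.comp (hc g⁻¹)).sub continuous_const⟩

end HoroAction

section Words

variable {S : Type*}

/-- A word over the symmetrised alphabet `S ∪ S⁻¹`. -/
abbrev Word (S : Type*) := List (S × Bool)

/-- The formal inverse of a word. -/
def wordInv (w : Word S) : Word S := (w.map fun a => (a.1, !a.2)).reverse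

/-- A word is reduced if it has no adjacent cancelling pair. -/
def ReducedWord (w : Word S) : Prop := w.Chain' fun a b => a.1 = b.1 → a.2 = b.2

/-- A word is cyclically reduced if all its cyclic shifts are reduced. -/
def CyclicallyReduced (w : Word S) : Prop := ∀ k : ℕ, ReducedWord (w.rotate k)

/-- The closure of `R ∪ R⁻¹` under cyclic shifts. -/
def symmClosure (R : Set (Word S)) : Set (Word S) :=
  {w | ∃ r ∈ R, ∃ k : ℕ, w = r.rotate k ∨ w = (wordInv r).rotate k}

/-- A piece: a (non-trivial) common prefix of two distinct elements of `R̄`. -/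
def IsPiece (R : Set (Word S)) (p : Word S) : Prop :=
  p ≠ [] ∧ ∃ r₁ ∈ symmClosure R, ∃ r₂ ∈ symmClosure R, r₁ ≠ r₂ ∧ p <+: r₁ ∧ p <+: r₂

/-- The `C'(lam)` small-cancellation condition. -/
def SmallCancellation (R : Set (Word S)) (lam : ℝ) : Prop :=
  (∀ r ∈ R, CyclicallyReduced r) ∧
  ∀ r ∈ symmClosure R, ∀ p : Word S, IsPiece R p → p <:+: r →
    (p.length : ℝ) < lam * r.length

/-- A viable function. -/
def Viable (f : ℕ → ℝ) : Prop :=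
  Monotone f ∧ (∀ n, 6 ≤ f n) ∧ Filter.Tendsto f Filter.atTop Filter.atTop

/-- The pair `(x, R)` satisfies the `C'(1/f)` small-cancellation condition. -/
def PairSmallCancellation (f : ℕ → ℝ) (x : Word S) (R : Set (Word S)) : Prop :=
  ∀ r ∈ symmClosure R, ∀ p : Word S, p ≠ [] → p <:+: x → p <:+: r →
    (p.length : ℝ) < (r.length : ℝ) / f r.length

/-- The increasing partial small-cancellation condition. -/
def IPSC (R : Set (Word S)) : Prop :=
  ∀ ns : ℕ → ℕ, (∀ i, 0 < ns i) →
    ∃ f : ℕ → ℝ, Viable f ∧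
      ∀ K : ℕ, ∃ i : ℕ, K ≤ i ∧ ∃ r ∈ symmClosure R, ∃ x y : Word S,
        r = x ++ y ∧ (ns i : ℝ) ≤ r.length ∧ (r.length : ℝ) / i ≤ x.length ∧
        PairSmallCancellation f x R

end Words

section Cayley

variable {G : Type*} [Group G] {S : Type*}

/-- The element of `G` spelled by a word over `S ∪ S⁻¹`. -/
def evalWord (σ : S → G) (w : Word S) : G :=
  (w.map fun a => if a.2 then σ a.1 else (σ a.1)⁻¹).prod

/-- The word metric on `G` with respect to the generating map `σ`. -/
noncomputable def wordDist (σ : S → G) (g h : G) : ℕ :=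
  sInf {n : ℕ | ∃ w : Word S, w.length = n ∧ g * evalWord σ w = h}

/-- A (discrete) edge path in the Cayley graph: consecutive points are adjacent. -/
def DIsPath (σ : S → G) (I : Set ℤ) (p : ℤ → G) : Prop :=
  ∀ n : ℤ, n ∈ I → n + 1 ∈ I → wordDist σ (p n) (p (n + 1)) ≤ 1

/-- A discrete `Q`-quasi-geodesic in the Cayley graph. -/
def DQGeoOn (σ : S → G) (Q : ℝ) (I : Set ℤ) (p : ℤ → G) : Prop :=
  DIsPath σ I p ∧ ∀ m ∈ I, ∀ n ∈ I,
    |(n : ℝ) - (m : ℝ)| / Q - Q ≤ (wordDist σ (p m) (p n) : ℝ) ∧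
      (wordDist σ (p m) (p n) : ℝ) ≤ Q * |(n : ℝ) - (m : ℝ)| + Q

/-- A discrete geodesic in the Cayley graph. -/
def DGeodesicOn (σ : S → G) (I : Set ℤ) (p : ℤ → G) : Prop :=
  ∀ m ∈ I, ∀ n ∈ I, (wordDist σ (p m) (p n) : ℤ) = |n - m|

/-- `p` is `M`-Morse on `I` in the Cayley graph. -/
def DMorseOn (σ : S → G) (M : ℝ → ℝ) (I : Set ℤ) (p : ℤ → G) : Prop :=
  ∀ Q : ℝ, 1 ≤ Q → ∀ s ∈ I, ∀ t ∈ I, s ≤ t →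
    ∀ (q : ℤ → G) (a b : ℤ), a ≤ b → DQGeoOn σ Q (Set.Icc a b) q →
      q a = p s → q b = p t →
      ∀ n ∈ Set.Icc a b, ∃ m ∈ Set.Icc s t, (wordDist σ (q n) (p m) : ℝ) ≤ M Q

/-- A geodesic ray in the Cayley graph based at the identity. -/
def DGeodesicRay (σ : S → G) (p : ℤ → G) : Prop :=
  p 0 = 1 ∧ DGeodesicOn σ (Set.Ici 0) p

/-- `p` is `L`-locally an `M`-Morse `Q`-quasi-geodesic. -/
def DLocMorseQGeoOn (σ : S → G) (Q : ℝ) (M : ℝ → ℝ) (L : ℝ) (I : Set ℤ) (p : ℤ → G) : Prop :=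
  ∀ s ∈ I, ∀ t ∈ I, s ≤ t → ((t - s : ℤ) : ℝ) ≤ L →
    DQGeoOn σ Q (Set.Icc s t) p ∧ DMorseOn σ M (Set.Icc s t) p

/-- `p` is `L`-locally `M`-Morse. -/
def DLocMorseOn (σ : S → G) (M : ℝ → ℝ) (L : ℝ) (I : Set ℤ) (p : ℤ → G) : Prop :=
  ∀ s ∈ I, ∀ t ∈ I, s ≤ t → ((t - s : ℤ) : ℝ) ≤ L → DMorseOn σ M (Set.Icc s t) p

/-- The Morse local-to-global property for the Cayley graph of `(G, σ)`. -/
def CayMLTG (σ : S → G) : Prop :=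
  ∀ Q : ℝ, 1 ≤ Q → ∀ M : ℝ → ℝ, IsMorseGauge M →
    ∃ (L Q' : ℝ) (M' : ℝ → ℝ), 0 < L ∧ 1 ≤ Q' ∧ IsMorseGauge M' ∧
      ∀ I : Set ℤ, I.OrdConnected → ∀ p : ℤ → G,
        DLocMorseQGeoOn σ Q M L I p → DQGeoOn σ Q' I p ∧ DMorseOn σ M' I p

/-- The geodesic Morse local-to-global property for the Cayley graph. -/
def CayGeodesicMLTG (σ : S → G) : Prop :=
  ∀ M : ℝ → ℝ, IsMorseGauge M →
    ∃ (L : ℝ) (M' : ℝ → ℝ), 0 < L ∧ IsMorseGauge M' ∧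
      ∀ I : Set ℤ, I.OrdConnected → ∀ p : ℤ → G, DGeodesicOn σ I p →
        DLocMorseOn σ M L I p → DMorseOn σ M' I p

/-- σ-compactness of the Morse boundary of the Cayley graph. -/
def CaySigmaCompact (σ : S → G) : Prop :=
  ∃ Ms : ℕ → ℝ → ℝ, (∀ n, IsMorseGauge (Ms n)) ∧
    ∀ p : ℤ → G, DGeodesicRay σ p → ∀ M : ℝ → ℝ, IsMorseGauge M →
      DMorseOn σ M (Set.Ici 0) p → ∃ n, DMorseOn σ (Ms n) (Set.Ici 0) p

/-- Strong σ-compactness of the Morse boundary of the Cayley graph. -/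
def CayStronglySigmaCompact (σ : S → G) : Prop :=
  ∃ Ms : ℕ → ℝ → ℝ, (∀ n, IsMorseGauge (Ms n)) ∧
    (∀ p : ℤ → G, DGeodesicRay σ p → ∀ M : ℝ → ℝ, IsMorseGauge M →
      DMorseOn σ M (Set.Ici 0) p → ∃ n, DMorseOn σ (Ms n) (Set.Ici 0) p) ∧
    (∀ M : ℝ → ℝ, IsMorseGauge M → ∃ n, ∀ p : ℤ → G, DGeodesicRay σ p →
      DMorseOn σ M (Set.Ici 0) p → DMorseOn σ (Ms n) (Set.Ici 0) p)

/-- The edge path starting at `g` labelled by the word `w`. -/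
def pathOfWord (σ : S → G) (g : G) (w : Word S) : ℤ → G :=
  fun n => g * evalWord σ (w.take n.toNat)

end Cayley

/-- The canonical generating map of a presented group `⟨S | R⟩`. -/
def presGen {S : Type*} (R : Set (Word S)) : S → PresentedGroup (FreeGroup.mk '' R) :=
  fun s => PresentedGroup.of s

end MorseLTG

/-!
Read around a relator `r` of length `n`, and form the cycle of length `n` labelled by `r`.  Glue to
it, at every vertex at once, the missing part of every relator that does not yet close up there,
folding together the common initial parts of the new arcs, and repeat for ever.  Small cancellation
preserves the invariant that a path reading at least a third of a relator closes up.  So at each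
stage the part of a relator already present is less than a third of it, while a new arc shares less
than a sixth of the relator with other new arcs at either end; hence every function that is
`1`-Lipschitz on the old graph extends over the new arcs, being constant near both ends and linear
in between.  In the limit all relators close up, so the presented group acts on the vertices, and
the extensions of the distance functions of the initial cycle show that `r` labels an isometrically
embedded cycle of the Cayley graph.

If `w` is a locally Morse subword of `r`, its initial part of length at most `n / 2` is therefore a
geodesic, hence Morse by the geodesic local-to-global property.  But the rest of the cycle is a
quasi-geodesic with the same endpoints whose midpoint is at distance about `n / 4` from that
geodesic, and this bounds `n`.
-/

namespace MorseLTG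

section Relators

variable {A : Type*}

/-- The word `f 0 f 1 ⋯ f (n - 1)`. -/
def word (f : ℤ → A) (n : ℕ) : List A :=
  (List.range n).map fun i : ℕ => f i

@[simp]
theorem length_word (f : ℤ → A) (n : ℕ) : (word f n).length = n := by
  simp [word]

theorem word_succ (f : ℤ → A) (n : ℕ) : word f (n + 1) = word f n ++ [f n] := by
  simp [word, List.range_succ]

theorem word_eq_word_iff {f g : ℤ → A} {m n : ℕ} :
    word f m = word g n ↔ m = n ∧ ∀ i : ℤ, 0 ≤ i → i < m → f i = g i := by
  constructor
  · intro h
    obtain rfl : m = n := by simpa using congrArg List.length h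
    refine ⟨rfl, fun i h₀ hi => ?_⟩
    lift i to ℕ using h₀
    exact List.map_inj_left.1 h i (List.mem_range.2 (by exact_mod_cast hi))
  · rintro ⟨rfl, h⟩
    exact List.map_congr_left fun i hi =>
      h i (by positivity) (by exact_mod_cast List.mem_range.1 hi)

theorem eq_of_periodic_of_modEq {f : ℤ → A} {n i j : ℤ} (hf : Function.Periodic f n)
    (h : i ≡ j [ZMOD n]) : f i = f j := by
  obtain ⟨k, hk⟩ := Int.modEq_iff_dvd.1 h
  obtain rfl : j = i + k * n := by linarith
  exact (hf.int_mul k i).symm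

/-- An abstract `C'(1/6)` system of relators over an alphabet `A` with formal inverses.  A relator
is encoded by the bi-infinite periodic sequence it spells together with its length, which makes
cyclic shifts translations. -/
structure RelatorSystem (A : Type*) where
  inv : A → A
  inv_inv : ∀ a, inv (inv a) = a
  Rel : (ℤ → A) → ℤ → Prop
  pos : ∀ {f n}, Rel f n → 0 < n
  periodic : ∀ {f n}, Rel f n → Function.Periodic f n
  shift : ∀ {f n}, Rel f n → ∀ j, Rel (fun i => f (i + j)) n
  reverse : ∀ {f n}, Rel f n → ∀ j, Rel (fun i => inv (f (j - i))) n
  reduced : ∀ {f n}, Rel f n → ∀ i, f (i + 1) ≠ inv (f i)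
  small : ∀ {f n g m}, Rel f n → Rel g m → ∀ l, (∀ i, 0 ≤ i → i < l → f i = g i) →
    (f = g ∧ n = m) ∨ (6 * l < n ∧ 6 * l < m)

theorem RelatorSystem.inv_injective (Q : RelatorSystem A) : Function.Injective Q.inv :=
  Function.Involutive.injective Q.inv_inv

end Relators

section Graphs

variable {A : Type*} {Q : RelatorSystem A} {Z : Type*}

/-- A graph with vertices in `Z` whose oriented edges carry letters of the alphabet of `Q`, with at
most one outgoing edge of each label at each vertex. -/
structure LabelledGraph (Q : RelatorSystem A) (Z : Type*) where
  verts : Set Z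
  Edge : Z → A → Z → Prop
  left_mem : ∀ {x a y}, Edge x a y → x ∈ verts
  symm : ∀ {x a y}, Edge x a y → Edge y (Q.inv a) x
  det : ∀ {x a y y'}, Edge x a y → Edge x a y' → y = y'

namespace LabelledGraph

variable (Γ : LabelledGraph Q Z)

/-- Between the indices `a` and `b`, the sequence `ζ` is an edge path reading the letters of `f`. -/
def IsPath (f : ℤ → A) (a b : ℤ) (ζ : ℤ → Z) : Prop :=
  ∀ i, a ≤ i → i < b → Γ.Edge (ζ i) (f i) (ζ (i + 1))

/-- `ξ` is a closed edge path of length `n` reading the letters of `f`. -/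
def IsLoop (f : ℤ → A) (n : ℤ) (ξ : ℤ → Z) : Prop :=
  Function.Periodic ξ n ∧ ∀ i, Γ.Edge (ξ i) (f i) (ξ (i + 1))

/-- The relator `f` of length `n`, read from its index `c` on, closes up at the vertex `v`. -/
def ClosedAt (f : ℤ → A) (n c : ℤ) (v : Z) : Prop :=
  ∃ ξ, Γ.IsLoop f n ξ ∧ ξ c = v

/-- Every path reading at least a third of a relator closes up: the invariant of the
construction. -/
def ClosesThirds : Prop :=
  ∀ ⦃f : ℤ → A⦄ ⦃n : ℤ⦄, Q.Rel f n → ∀ ⦃a b : ℤ⦄ ⦃ζ : ℤ → Z⦄, Γ.IsPath f a b ζ →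
    n ≤ 3 * (b - a) → Γ.ClosedAt f n a (ζ a)

/-- A function on vertices which is `1`-Lipschitz along edges. -/
def IsLipschitz (h : Z → ℝ) : Prop :=
  ∀ ⦃x a y⦄, Γ.Edge x a y → |h y - h x| ≤ 1

variable {Γ} {x x' y : Z} {a : A} {f : ℤ → A} {b c d n : ℤ} {ζ ζ' : ℤ → Z}

theorem right_mem (h : Γ.Edge x a y) : y ∈ Γ.verts :=
  Γ.left_mem (Γ.symm h)

theorem codet (h : Γ.Edge x a y) (h' : Γ.Edge x' a y) : x = x' :=
  Γ.det (Γ.symm h) (Γ.symm h')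

theorem edge_of_edge_inv (h : Γ.Edge x (Q.inv a) y) : Γ.Edge y a x :=
  Q.inv_inv a ▸ Γ.symm h

theorem IsLoop.isPath (h : Γ.IsLoop f n ζ) (b c : ℤ) : Γ.IsPath f b c ζ :=
  fun i _ _ => h.2 i

theorem IsLoop.shift (h : Γ.IsLoop f n ζ) (j : ℤ) :
    Γ.IsLoop (fun i => f (i + j)) n fun i => ζ (i + j) :=
  ⟨fun i => by simpa only [add_right_comm] using h.1 (i + j),
    fun i => by simpa only [add_right_comm] using h.2 (i + j)⟩

theorem IsPath.eq_of_eq {a : ℤ} (h : Γ.IsPath f a b ζ) (h' : Γ.IsPath f a b ζ') (hac : a ≤ c)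
    (hcb : c ≤ b) (hc : ζ c = ζ' c) (had : a ≤ d) (hdb : d ≤ b) : ζ d = ζ' d := by
  rcases le_total c d with hcd | hdc
  · induction d, hcd using Int.leInduction with
    | base => exact hc
    | succ d hd ih =>
      have hdd := h' d (by omega) (by omega)
      rw [← ih (by omega) (by omega)] at hdd
      exact Γ.det (h d (by omega) (by omega)) hdd
  · induction d, hdc using Int.leInductionDown with
    | base => exact hc
    | pred d hd ih =>
      have hd₁ := h (d - 1) (by omega) (by omega)
      have hd₂ := h' (d - 1) (by omega) (by omega)
      rw [sub_add_cancel] at hd₁ hd₂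
      rw [← ih (by omega) (by omega)] at hd₂
      exact codet hd₁ hd₂

theorem IsPath.closedAt {a : ℤ} (h : Γ.IsPath f a b ζ) (hc : Γ.ClosedAt f n c (ζ c))
    (hac : a ≤ c) (hcb : c ≤ b) (had : a ≤ d) (hdb : d ≤ b) : Γ.ClosedAt f n d (ζ d) := by
  obtain ⟨ξ, hξ, hξc⟩ := hc
  exact ⟨ξ, hξ, (hξ.isPath a b).eq_of_eq h hac hcb hξc had hdb⟩

theorem ClosedAt.shift {v : Z} (h : Γ.ClosedAt f n c v) (j : ℤ) :
    Γ.ClosedAt (fun i => f (i + j)) n (c - j) v := by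
  obtain ⟨ξ, hξ, rfl⟩ := h
  exact ⟨_, hξ.shift j, by simp⟩

theorem ClosedAt.exists_edge {v : Z} (h : Γ.ClosedAt f n c v) : ∃ w, Γ.Edge v (f c) w := by
  obtain ⟨ξ, hξ, rfl⟩ := h
  exact ⟨_, hξ.2 c⟩

theorem IsPath.closedAt_of_eq (hn : 0 < n) (hf : Function.Periodic f n) (h : Γ.IsPath f 0 n ζ)
    (h₀ : ζ n = ζ 0) : Γ.ClosedAt f n 0 (ζ 0) := by
  refine ⟨fun i => ζ (i % n), ⟨fun i => by simp, fun i => ?_⟩, by simp⟩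
  have hfi : f (i % n) = f i := eq_of_periodic_of_modEq hf (Int.mod_modEq i n)
  have hlt := Int.emod_lt_of_pos i hn
  have hζ : ζ ((i + 1) % n) = ζ (i % n + 1) := by
    rw [← Int.emod_add_emod]
    rcases (show i % n + 1 ≤ n from hlt).eq_or_lt with heq | hlt'
    · rw [heq, Int.emod_self, h₀]
    · rw [Int.emod_eq_of_lt (by have := Int.emod_nonneg i hn.ne'; omega) hlt']
  simpa only [hζ, hfi] using h (i % n) (Int.emod_nonneg i hn.ne') hlt

theorem IsLipschitz.abs_sub_le {h : Z → ℝ} (hh : Γ.IsLipschitz h) {a : ℤ} (hab : a ≤ b)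
    (hζ : Γ.IsPath f a b ζ) : |h (ζ b) - h (ζ a)| ≤ b - a := by
  induction b, hab using Int.leInduction with
  | base => simp
  | succ b hab ih =>
    have hlast := hh (hζ b (by omega) (by omega))
    have hprev := ih fun i hi hib => hζ i hi (by omega)
    have htri := _root_.abs_sub_le (h (ζ (b + 1))) (h (ζ b)) (h (ζ a))
    push_cast
    linarith

end LabelledGraph

end Graphs

section Arcs

variable {A : Type*} {Q : RelatorSystem A} {Z : Type*} {Γ : LabelledGraph Q Z}

/-- A relator that does not close up in `Γ`.  The letters of `label` with indices from `length` to
`period - 1` are read by a path of `Γ` from `target` to `source` which cannot be prolonged at either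
end; those with indices from `0` to `length - 1` are the missing arc from `source` to `target`. -/
@[ext]
structure MissingArc (Γ : LabelledGraph Q Z) where
  source : Z
  target : Z
  label : ℤ → A
  period : ℤ
  length : ℤ
  rel : Q.Rel label period
  length_le : length ≤ period
  source_mem : source ∈ Γ.verts
  target_mem : target ∈ Γ.verts
  exists_path : ∃ ζ : ℤ → Z,
    ζ length = target ∧ ζ period = source ∧ Γ.IsPath label length period ζ
  not_edge_source : ∀ w, ¬ Γ.Edge source (label 0) w
  not_edge_target : ∀ w, ¬ Γ.Edge w (label (length - 1)) target

/-- `e v p` serves as the vertex reached from `v ∈ V` by reading `p` along new arcs: it is a new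
vertex for every `v` and every `p ≠ []`. -/
structure IsFresh (e : Z → List A → Z) (V : Set Z) : Prop where
  nil : ∀ v ∈ V, e v [] = v
  inj : ∀ v ∈ V, ∀ w ∈ V, ∀ p q, e v p = e w q → v = w ∧ p = q

namespace MissingArc

open LabelledGraph

/-- The missing arc traversed backwards, from `target` to `source`. -/
@[simps]
def reverse (α : MissingArc Γ) : MissingArc Γ where
  source := α.target
  target := α.source
  label i := Q.inv (α.label (α.length - 1 - i))
  period := α.period
  length := α.length
  rel := Q.reverse α.rel _
  length_le := α.length_le
  source_mem := α.target_mem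
  target_mem := α.source_mem
  exists_path := by
    obtain ⟨ζ, hlength, hperiod, hζ⟩ := α.exists_path
    refine ⟨fun i => ζ (α.period + α.length - i), by simpa using hperiod, by simpa using hlength,
      fun i hi hi' => ?_⟩
    have hedge := Γ.symm (hζ (α.length - 1 - i + α.period) (by omega) (by omega))
    rw [Q.periodic α.rel] at hedge
    convert hedge using 2 <;> ring
  not_edge_source w hw := by
    rw [sub_zero] at hw
    exact α.not_edge_target w (edge_of_edge_inv hw)
  not_edge_target w hw := by
    rw [sub_self] at hw
    exact α.not_edge_source w (edge_of_edge_inv hw)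

@[simp]
theorem reverse_reverse (α : MissingArc Γ) : α.reverse.reverse = α := by
  ext <;> simp [Q.inv_inv]

theorem two_mul_period_lt (hΓ : Γ.ClosesThirds) (α : MissingArc Γ) :
    2 * α.period < 3 * α.length := by
  by_contra! hle
  obtain ⟨ζ, -, hperiod, hζ⟩ := α.exists_path
  have hclosed := hΓ α.rel hζ (by omega)
  obtain ⟨w, hw⟩ :=
    (hζ.closedAt hclosed le_rfl α.length_le α.length_le le_rfl).exists_edge
  rw [(Q.periodic α.rel).eq, hperiod] at hw
  exact α.not_edge_source w hw

theorem length_le_length {α β : MissingArc Γ} (hsource : α.source = β.source)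
    (hlabel : α.label = β.label) (hperiod : α.period = β.period) : α.length ≤ β.length := by
  by_contra! hlt
  obtain ⟨ζ, hζ₀, hζ₁, hζ⟩ := α.exists_path
  obtain ⟨ξ, -, hξ₁, hξ⟩ := β.exists_path
  rw [← hlabel, ← hperiod] at hξ
  rw [← hperiod, ← hsource, ← hζ₁] at hξ₁
  have hagree : ζ α.length = ξ α.length :=
    hζ.eq_of_eq (fun i hi hi' => hξ i (by omega) hi') α.length_le le_rfl hξ₁.symm le_rfl
      α.length_le
  have hedge := hξ (α.length - 1) (by omega) (by linarith [α.length_le])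
  rw [sub_add_cancel, ← hagree, hζ₀] at hedge
  exact α.not_edge_target _ hedge

theorem eq_of_source_eq {α β : MissingArc Γ} (hsource : α.source = β.source)
    (hlabel : α.label = β.label) (hperiod : α.period = β.period) : α = β := by
  have hlength : α.length = β.length := le_antisymm (length_le_length hsource hlabel hperiod)
    (length_le_length hsource.symm hlabel.symm hperiod.symm)
  obtain ⟨ζ, hζ₀, hζ₁, hζ⟩ := α.exists_path
  obtain ⟨ξ, hξ₀, hξ₁, hξ⟩ := β.exists_path
  rw [← hlabel, ← hperiod, ← hlength] at hξ
  rw [← hperiod, ← hsource, ← hζ₁] at hξ₁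
  rw [← hlength] at hξ₀
  have htarget : α.target = β.target := by
    rw [← hζ₀, ← hξ₀]
    exact hζ.eq_of_eq hξ α.length_le le_rfl hξ₁.symm le_rfl α.length_le
  exact MissingArc.ext hsource htarget hlabel hperiod hlength

theorem eq_or_six_mul_lt {α β : MissingArc Γ} (hsource : α.source = β.source) {l : ℤ}
    (h : ∀ i, 0 ≤ i → i < l → α.label i = β.label i) :
    α = β ∨ (6 * l < α.period ∧ 6 * l < β.period) :=
  (Q.small α.rel β.rel l h).imp_left fun h => eq_of_source_eq hsource h.1 h.2

/-- The vertex after `i` letters of the arc, named from its source. -/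
def prefixVertex (e : Z → List A → Z) (α : MissingArc Γ) (i : ℤ) : Z :=
  e α.source (word α.label i.toNat)

variable {e : Z → List A → Z} {α β : MissingArc Γ} {i j : ℤ}

theorem prefixVertex_eq_iff (he : IsFresh e Γ.verts) (hi : 0 ≤ i) (hj : 0 ≤ j) :
    prefixVertex e α i = prefixVertex e β j ↔
      α.source = β.source ∧ i = j ∧ ∀ t, 0 ≤ t → t < i → α.label t = β.label t := by
  lift i to ℕ using hi
  lift j to ℕ using hj
  rw [prefixVertex, prefixVertex, Int.toNat_natCast, Int.toNat_natCast, Nat.cast_inj,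
    ← word_eq_word_iff]
  exact ⟨he.inj _ α.source_mem _ β.source_mem _ _, fun h => by rw [h.1, h.2]⟩

theorem prefixVertex_zero (he : IsFresh e Γ.verts) (α : MissingArc Γ) :
    prefixVertex e α 0 = α.source :=
  he.nil _ α.source_mem

theorem eq_zero_of_prefixVertex_mem (he : IsFresh e Γ.verts) (hi : 0 ≤ i)
    (h : prefixVertex e α i ∈ Γ.verts) : i = 0 := by
  have hword := (he.inj _ α.source_mem _ h (word α.label i.toNat) [] (he.nil _ h).symm).2
  have := congrArg List.length hword
  simp only [length_word, List.length_nil] at this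
  omega

theorem label_eq_inv_of_prefixVertex_eq (he : IsFresh e Γ.verts) (hi : 0 ≤ i)
    (hj : j < β.length) (h : prefixVertex e α i = prefixVertex e β.reverse (β.length - j)) :
    α.label (i - 1) = Q.inv (β.label j) := by
  obtain ⟨-, hij, hlabel⟩ := (prefixVertex_eq_iff he hi (by omega)).1 h
  rw [hlabel (i - 1) (by omega) (by omega), reverse_label]
  congr 2
  omega

/-- The vertex after `i` letters of the arc, named from the nearer end of the arc.  The midpoint
gets the same one of its two names from either orientation. -/
noncomputable def vertex (e : Z → List A → Z) (α : MissingArc Γ) (i : ℤ) : Z :=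
  if 2 * i < α.length then prefixVertex e α i
  else if α.length < 2 * i then prefixVertex e α.reverse (α.length - i)
  else (Quot.out s(prefixVertex e α i, prefixVertex e α.reverse (α.length - i))).1

@[simp]
theorem vertex_reverse (e : Z → List A → Z) (α : MissingArc Γ) (i : ℤ) :
    vertex e α.reverse i = vertex e α (α.length - i) := by
  rcases lt_trichotomy (2 * i) α.length with h | h | h
  · rw [vertex, vertex, reverse_length, if_pos h, if_neg (by omega), if_pos (by omega),
      sub_sub_cancel]
  · rw [vertex, vertex, reverse_length, if_neg (by omega), if_neg (by omega), if_neg (by omega),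
      if_neg (by omega), Sym2.eq_swap, sub_sub_cancel, reverse_reverse]
  · rw [vertex, vertex, reverse_length, if_neg (by omega), if_pos (by omega), if_pos (by omega),
      reverse_reverse]

theorem vertex_of_lt (h : 2 * i < α.length) : vertex e α i = prefixVertex e α i :=
  if_pos h

theorem vertex_eq_or (e : Z → List A → Z) (α : MissingArc Γ) (i : ℤ) :
    (vertex e α i = prefixVertex e α i ∧ 2 * i ≤ α.length) ∨
    (vertex e α i = prefixVertex e α.reverse (α.length - i) ∧ α.length ≤ 2 * i) := by
  unfold vertex
  split_ifs with hlt hgt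
  · exact .inl ⟨rfl, hlt.le⟩
  · exact .inr ⟨rfl, hgt.le⟩
  · exact (Sym2.mem_iff.1 (Sym2.out_fst_mem s(prefixVertex e α i, _))).imp
      (⟨·, by omega⟩) (⟨·, by omega⟩)

theorem vertex_zero (hΓ : Γ.ClosesThirds) (he : IsFresh e Γ.verts) (α : MissingArc Γ) :
    vertex e α 0 = α.source := by
  have := α.two_mul_period_lt hΓ
  rw [vertex_of_lt (by linarith [Q.pos α.rel]), prefixVertex_zero he]

theorem vertex_length (hΓ : Γ.ClosesThirds) (he : IsFresh e Γ.verts) (α : MissingArc Γ) :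
    vertex e α α.length = α.target := by
  simpa using vertex_zero hΓ he α.reverse

theorem eq_zero_or_eq_length_of_vertex_mem (he : IsFresh e Γ.verts) (h₀ : 0 ≤ i)
    (h₁ : i ≤ α.length) (h : vertex e α i ∈ Γ.verts) : i = 0 ∨ i = α.length := by
  rcases vertex_eq_or e α i with ⟨hv, -⟩ | ⟨hv, -⟩ <;> rw [hv] at h
  · exact .inl (eq_zero_of_prefixVertex_mem he h₀ h)
  · have := eq_zero_of_prefixVertex_mem he (by omega) h
    exact .inr (by omega)

theorem vertex_succ_eq_of_prefixVertex_eq (hΓ : Γ.ClosesThirds) (he : IsFresh e Γ.verts)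
    (hi : 0 ≤ i) (hj : 0 ≤ j) (h : prefixVertex e α i = prefixVertex e β j)
    (hlabel : α.label i = β.label j) : vertex e α (i + 1) = vertex e β (j + 1) := by
  obtain ⟨hsource, rfl, hagree⟩ := (prefixVertex_eq_iff he hi hj).1 h
  have hagree' : ∀ t, 0 ≤ t → t < i + 1 → α.label t = β.label t := fun t h₀ ht =>
    (Int.lt_add_one_iff.1 ht).eq_or_lt.elim (fun h => h ▸ hlabel) (hagree t h₀)
  rcases eq_or_six_mul_lt hsource hagree' with rfl | ⟨hα, hβ⟩
  · rfl
  · have := α.two_mul_period_lt hΓ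
    have := β.two_mul_period_lt hΓ
    rw [vertex_of_lt (by omega), vertex_of_lt (by omega),
      prefixVertex_eq_iff he (by omega) (by omega)]
    exact ⟨hsource, rfl, hagree'⟩

theorem vertex_succ_eq_of_reverse_prefixVertex_eq (he : IsFresh e Γ.verts)
    (hi : α.length ≤ 2 * i) (hj : β.length ≤ 2 * j) (hi' : i < α.length) (hj' : j < β.length)
    (h : prefixVertex e α.reverse (α.length - i) = prefixVertex e β.reverse (β.length - j)) :
    vertex e α (i + 1) = vertex e β (j + 1) := by
  obtain ⟨hsource, hij, hagree⟩ := (prefixVertex_eq_iff he (by omega) (by omega)).1 h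
  have hα := vertex_reverse e α (α.length - (i + 1))
  have hβ := vertex_reverse e β (β.length - (j + 1))
  rw [sub_sub_cancel] at hα hβ
  rw [← hα, ← hβ, vertex_of_lt (by simp only [reverse_length]; omega),
    vertex_of_lt (by simp only [reverse_length]; omega),
    prefixVertex_eq_iff he (by omega) (by omega)]
  exact ⟨hsource, by omega, fun t h₀ ht => hagree t h₀ (by omega)⟩

theorem vertex_succ_eq (hΓ : Γ.ClosesThirds) (he : IsFresh e Γ.verts) (hi : 0 ≤ i) (hj : 0 ≤ j)
    (hi' : i < α.length) (hj' : j < β.length) (h : vertex e α i = vertex e β j)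
    (hlabel : α.label i = β.label j) : vertex e α (i + 1) = vertex e β (j + 1) := by
  have hne : ∀ {α β : MissingArc Γ} {i j : ℤ}, 0 ≤ i → j < β.length → α.label i = β.label j →
      prefixVertex e α i ≠ prefixVertex e β.reverse (β.length - j) := by
    intro α β i j hi hj hlabel heq
    refine Q.reduced α.rel (i - 1) ?_
    rw [label_eq_inv_of_prefixVertex_eq he hi hj heq, Q.inv_inv, sub_add_cancel, hlabel]
  rcases vertex_eq_or e α i with ⟨hα, hα'⟩ | ⟨hα, hα'⟩ <;>
    rcases vertex_eq_or e β j with ⟨hβ, hβ'⟩ | ⟨hβ, hβ'⟩ <;> rw [hα, hβ] at h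
  · exact vertex_succ_eq_of_prefixVertex_eq hΓ he hi hj h hlabel
  · exact (hne hi hj' hlabel h).elim
  · exact (hne hj hi' hlabel.symm h.symm).elim
  · exact vertex_succ_eq_of_reverse_prefixVertex_eq he hα' hβ' hi' hj' h

end MissingArc

end Arcs

section Extension

variable {A : Type*} {Q : RelatorSystem A} {Z : Type*} {Γ : LabelledGraph Q Z}
  {e : Z → List A → Z}

namespace LabelledGraph

open MissingArc

/-- An edge of one of the missing arcs of a graph. -/
def IsArcEdge (Γ : LabelledGraph Q Z) (e : Z → List A → Z) (x : Z) (a : A) (y : Z) : Prop :=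
  ∃ (α : MissingArc Γ) (i : ℤ), 0 ≤ i ∧ i < α.length ∧
    vertex e α i = x ∧ α.label i = a ∧ vertex e α (i + 1) = y

theorem vertex_mem_image2 (e : Z → List A → Z) (α : MissingArc Γ) (i : ℤ) :
    vertex e α i ∈ Set.image2 e Γ.verts Set.univ := by
  rcases vertex_eq_or e α i with ⟨h, -⟩ | ⟨h, -⟩ <;> rw [h]
  · exact Set.mem_image2_of_mem α.source_mem (Set.mem_univ _)
  · exact Set.mem_image2_of_mem α.target_mem (Set.mem_univ _)

theorem IsArcEdge.symm {x y : Z} {a : A} (h : Γ.IsArcEdge e x a y) :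
    Γ.IsArcEdge e y (Q.inv a) x := by
  obtain ⟨α, i, h₀, h₁, rfl, rfl, rfl⟩ := h
  refine ⟨α.reverse, α.length - (i + 1), by omega, by simp only [reverse_length]; omega, ?_, ?_, ?_⟩
  · rw [vertex_reverse, sub_sub_cancel]
  · rw [reverse_label]
    congr 2
    ring
  · rw [vertex_reverse]
    congr 1
    ring

theorem IsArcEdge.not_edge (hΓ : Γ.ClosesThirds) (he : IsFresh e Γ.verts) {x y y' : Z} {a : A}
    (h : Γ.IsArcEdge e x a y) : ¬ Γ.Edge x a y' := by
  obtain ⟨α, i, h₀, h₁, rfl, rfl, -⟩ := h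
  intro hedge
  obtain rfl : i = 0 :=
    (eq_zero_or_eq_length_of_vertex_mem he h₀ h₁.le (Γ.left_mem hedge)).resolve_right h₁.ne
  rw [vertex_zero hΓ he] at hedge
  exact α.not_edge_source _ hedge

/-- The graph obtained by gluing in all missing arcs at once. -/
def extension (hΓ : Γ.ClosesThirds) (he : IsFresh e Γ.verts) : LabelledGraph Q Z where
  verts := Set.image2 e Γ.verts Set.univ
  Edge x a y := Γ.Edge x a y ∨ Γ.IsArcEdge e x a y
  left_mem := by
    rintro x a y (h | ⟨α, i, -, -, rfl, -, -⟩)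
    · exact ⟨x, Γ.left_mem h, [], Set.mem_univ _, he.nil _ (Γ.left_mem h)⟩
    · exact vertex_mem_image2 e α i
  symm := Or.imp Γ.symm IsArcEdge.symm
  det := by
    rintro x a y y' (h | h) (h' | h')
    · exact Γ.det h h'
    · exact (h'.not_edge hΓ he h).elim
    · exact (h.not_edge hΓ he h').elim
    · obtain ⟨α, i, h₀, h₁, rfl, rfl, rfl⟩ := h
      obtain ⟨β, j, h₀', h₁', hvertex, hlabel, rfl⟩ := h'
      exact vertex_succ_eq hΓ he h₀ h₀' h₁ h₁' hvertex.symm hlabel.symm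

variable (hΓ : Γ.ClosesThirds) (he : IsFresh e Γ.verts)
variable {f : ℤ → A} {a b c d n : ℤ} {ζ : ℤ → Z}

theorem isPath_vertex (α : MissingArc Γ) :
    (extension hΓ he).IsPath α.label 0 α.length (vertex e α) :=
  fun i h₀ h₁ => .inr ⟨α, i, h₀, h₁, rfl, rfl, rfl⟩

theorem IsPath.extension (h : Γ.IsPath f a b ζ) : (extension hΓ he).IsPath f a b ζ :=
  fun i h₀ h₁ => .inl (h i h₀ h₁)

theorem closedAt_source (α : MissingArc Γ) :
    (extension hΓ he).ClosedAt α.label α.period 0 α.source := by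
  obtain ⟨ζ, hζ₀, hζ₁, hζ⟩ := α.exists_path
  have hlength : 0 < α.length := by
    have := α.two_mul_period_lt hΓ
    linarith [Q.pos α.rel]
  let ξ : ℤ → Z := fun i => if i ≤ α.length then vertex e α i else ζ i
  have hξ_left : ∀ i, i ≤ α.length → ξ i = vertex e α i := fun i hi => if_pos hi
  have hξ_right : ∀ i, α.length ≤ i → ξ i = ζ i := by
    intro i hi
    rcases hi.eq_or_lt with rfl | hlt
    · rw [hξ_left _ le_rfl, vertex_length hΓ he, hζ₀]
    · exact if_neg hlt.not_ge
  have hξ : (extension hΓ he).IsPath α.label 0 α.period ξ := by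
    intro i h₀ h₁
    rcases lt_or_ge i α.length with hi | hi
    · rw [hξ_left i hi.le, hξ_left (i + 1) hi]
      exact isPath_vertex hΓ he α i h₀ hi
    · rw [hξ_right i hi, hξ_right (i + 1) (by omega)]
      exact .inl (hζ i hi h₁)
  have hξ₀ : ξ 0 = α.source := by rw [hξ_left 0 hlength.le, vertex_zero hΓ he]
  rw [← hξ₀]
  refine hξ.closedAt_of_eq (Q.pos α.rel) (Q.periodic α.rel) ?_
  rw [hξ₀, hξ_right _ α.length_le, hζ₁]

theorem IsPath.mem_verts (h : Γ.IsPath f a b ζ) (hc : ζ c ∈ Γ.verts) (hac : a ≤ c) (hcb : c ≤ b)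
    (had : a ≤ d) (hdb : d ≤ b) : ζ d ∈ Γ.verts := by
  rcases hdb.lt_or_eq with hlt | rfl
  · exact Γ.left_mem (h d had hlt)
  · rcases had.lt_or_eq with hlt | rfl
    · simpa using right_mem (h (d - 1) (by omega) (by omega))
    · rwa [le_antisymm hac hcb]

theorem IsPath.update_right {w : Z} (h : Γ.IsPath f a b ζ) (hw : Γ.Edge (ζ b) (f b) w) :
    Γ.IsPath f a (b + 1) (Function.update ζ (b + 1) w) := by
  intro i ha hb
  rw [Function.update_of_ne (by omega)]
  rcases eq_or_ne i b with rfl | hne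
  · rwa [Function.update_self]
  · rw [Function.update_of_ne (by omega)]
    exact h i ha (by omega)

theorem IsPath.update_left {w : Z} (h : Γ.IsPath f a b ζ) (hw : Γ.Edge w (f (a - 1)) (ζ a)) :
    Γ.IsPath f (a - 1) b (Function.update ζ (a - 1) w) := by
  intro i ha hb
  rw [Function.update_of_ne (show i + 1 ≠ a - 1 by omega)]
  rcases eq_or_ne i (a - 1) with rfl | hne
  · rwa [Function.update_self, sub_add_cancel]
  · rw [Function.update_of_ne hne]
    exact h i (by omega) hb

theorem exists_maximal_isPath {v : Z}
    (hbound : ∀ a b ζ, a ≤ 0 → 0 ≤ b → ζ 0 = v → Γ.IsPath f a b ζ → b - a ≤ n) :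
    ∃ a b ζ, a ≤ 0 ∧ 0 ≤ b ∧ ζ 0 = v ∧ Γ.IsPath f a b ζ ∧
      (∀ w, ¬ Γ.Edge (ζ b) (f b) w) ∧ ∀ w, ¬ Γ.Edge w (f (a - 1)) (ζ a) := by
  obtain ⟨b, ⟨hb, ζ, hζv, hζ⟩, hbmax⟩ := Int.exists_greatest_of_bdd
    (P := fun b => 0 ≤ b ∧ ∃ ζ : ℤ → Z, ζ 0 = v ∧ Γ.IsPath f 0 b ζ)
    ⟨n, fun b ⟨hb, ζ, hζv, hζ⟩ => by simpa using hbound 0 b ζ le_rfl hb hζv hζ⟩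
    ⟨0, le_rfl, fun _ => v, rfl, fun i _ _ => by omega⟩
  obtain ⟨a, ⟨ha, ξ, hξv, hξ⟩, hamin⟩ := Int.exists_least_of_bdd
    (P := fun a => a ≤ 0 ∧ ∃ ζ : ℤ → Z, ζ 0 = v ∧ Γ.IsPath f a b ζ)
    ⟨b - n, fun a ⟨ha, ζ, hζv, hζ⟩ => by linarith [hbound a b ζ ha hb hζv hζ]⟩
    ⟨0, le_rfl, ζ, hζv, hζ⟩
  refine ⟨a, b, ξ, ha, hb, hξv, hξ, fun w hw => ?_, fun w hw => ?_⟩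
  · have hpath : Γ.IsPath f 0 b ξ := fun i h₀ h₁ => hξ i (by omega) h₁
    have := hbmax (b + 1) ⟨by omega, _, by rwa [Function.update_of_ne (by omega)],
      hpath.update_right hw⟩
    omega
  · have := hamin (a - 1) ⟨by omega, _, by rwa [Function.update_of_ne (by omega)],
      hξ.update_left hw⟩
    omega

theorem exists_missingArc (hr : Q.Rel f n) (hζ : Γ.IsPath f a b ζ) (hab : a ≤ b)
    (ha : ζ a ∈ Γ.verts) (hright : ∀ w, ¬ Γ.Edge (ζ b) (f b) w)
    (hleft : ∀ w, ¬ Γ.Edge w (f (a - 1)) (ζ a)) :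
    ∃ α : MissingArc Γ, α.source = ζ b ∧ α.label = (fun i => f (i + b)) ∧ α.period = n :=
  ⟨{ source := ζ b
     target := ζ a
     label i := f (i + b)
     period := n
     length := n - (b - a)
     rel := Q.shift hr b
     length_le := by omega
     source_mem := hζ.mem_verts ha le_rfl hab hab le_rfl
     target_mem := ha
     exists_path := by
      refine ⟨fun i => ζ (i + b - n), congrArg ζ (by ring), congrArg ζ (by ring), fun i h₀ h₁ => ?_⟩
      have hedge := hζ (i + b - n) (by omega) (by omega)
      rwa [(Q.periodic hr).sub_eq, ← add_sub_right_comm, add_right_comm] at hedge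
     not_edge_source := by simpa using hright
     not_edge_target := by
      rwa [show n - (b - a) - 1 + b = a - 1 + n by ring, Q.periodic hr] }, rfl, rfl, rfl⟩

theorem extension_closedAt {v : Z} (hv : v ∈ Γ.verts) (hr : Q.Rel f n) :
    (extension hΓ he).ClosedAt f n 0 v := by
  by_cases hclosed : Γ.ClosedAt f n 0 v
  · obtain ⟨ξ, hξ, hξv⟩ := hclosed
    exact ⟨ξ, ⟨hξ.1, fun i => .inl (hξ.2 i)⟩, hξv⟩
  obtain ⟨a, b, ζ, ha, hb, rfl, hζ, hright, hleft⟩ :=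
    exists_maximal_isPath (Γ := Γ) (f := f) (n := n) (v := v) (by
      rintro a b ζ ha hb rfl hζ
      by_contra! hlt
      refine hclosed (hζ.closedAt (hΓ hr hζ ?_) le_rfl (by omega) ha hb)
      linarith [Q.pos hr])
  have hmem := hζ.mem_verts hv ha hb le_rfl (ha.trans hb)
  obtain ⟨α, hsource, hlabel, hperiod⟩ :=
    exists_missingArc hr hζ (ha.trans hb) hmem hright hleft
  have hloop := (closedAt_source hΓ he α).shift (-b)
  simp only [hsource, hlabel, hperiod, neg_add_cancel_right, sub_neg_eq_add, zero_add] at hloop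
  exact (hζ.extension hΓ he).closedAt hloop (ha.trans hb) le_rfl ha hb

end LabelledGraph

end Extension

section LipschitzExtension

variable {A : Type*} {Q : RelatorSystem A} {Z : Type*} {Γ : LabelledGraph Q Z}
  {e : Z → List A → Z}

namespace MissingArc

open LabelledGraph

/-- A function rising linearly along the arc from `0` to `1`, and constant within a sixth of the
period from either end, where the arc may share its vertices with other arcs. -/
noncomputable def ramp (α : MissingArc Γ) (i : ℤ) : ℝ :=
  Set.projIcc 0 1 zero_le_one ((6 * i - α.period) / (6 * α.length - 2 * α.period) : ℝ)

theorem ramp_slope_pos (hΓ : Γ.ClosesThirds) (α : MissingArc Γ) :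
    (0 : ℝ) < 6 * α.length - 2 * α.period := by
  have h := α.two_mul_period_lt hΓ
  have hpos := Q.pos α.rel
  exact_mod_cast (show 0 < 6 * α.length - 2 * α.period by omega)

theorem ramp_eq_zero (hΓ : Γ.ClosesThirds) {α : MissingArc Γ} {i : ℤ} (hi : 6 * i ≤ α.period) :
    α.ramp i = 0 := by
  rw [ramp, Set.projIcc_of_le_left]
  refine div_nonpos_of_nonpos_of_nonneg ?_ (α.ramp_slope_pos hΓ).le
  exact_mod_cast (show 6 * i - α.period ≤ 0 by omega)

theorem ramp_reverse (hΓ : Γ.ClosesThirds) (α : MissingArc Γ) (i : ℤ) :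
    α.reverse.ramp (α.length - i) = 1 - α.ramp i := by
  rw [ramp, ramp, ← unitInterval.coe_symm_eq, unitInterval.symm_projIcc]
  congr 3
  rw [reverse_period, reverse_length, eq_sub_iff_add_eq, ← add_div,
    div_eq_one_iff_eq (α.ramp_slope_pos hΓ).ne']
  push_cast
  ring

theorem abs_ramp_succ_sub_le (hΓ : Γ.ClosesThirds) (α : MissingArc Γ) (i : ℤ) :
    |α.ramp (i + 1) - α.ramp i| ≤ 6 / (6 * α.length - 2 * α.period) := by
  refine (Set.abs_projIcc_sub_projIcc zero_le_one).trans (le_of_eq ?_)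
  rw [← sub_div, abs_div, abs_of_pos (α.ramp_slope_pos hΓ)]
  push_cast
  congr 1
  ring_nf
  norm_num

/-- The value at the `i`-th vertex of the arc of the extension of `h`. -/
noncomputable def extensionValue (h : Z → ℝ) (α : MissingArc Γ) (i : ℤ) : ℝ :=
  AffineMap.lineMap (h α.source) (h α.target) (α.ramp i)

variable {h : Z → ℝ} {α β : MissingArc Γ} {i j : ℤ}

theorem extensionValue_of_le (hΓ : Γ.ClosesThirds) (hi : 6 * i ≤ α.period) :
    extensionValue h α i = h α.source := by
  rw [extensionValue, ramp_eq_zero hΓ hi, AffineMap.lineMap_apply_zero]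

theorem extensionValue_reverse (hΓ : Γ.ClosesThirds) (h : Z → ℝ) (α : MissingArc Γ) (i : ℤ) :
    extensionValue h α.reverse (α.length - i) = extensionValue h α i := by
  rw [extensionValue, ramp_reverse hΓ, AffineMap.lineMap_apply_one_sub]
  rfl

theorem extensionValue_eq_of_prefixVertex_eq (hΓ : Γ.ClosesThirds) (he : IsFresh e Γ.verts)
    (h : Z → ℝ) (hi : 0 ≤ i) (hj : 0 ≤ j) (heq : prefixVertex e α i = prefixVertex e β j) :
    extensionValue h α i = extensionValue h β j := by
  obtain ⟨hsource, rfl, hagree⟩ := (prefixVertex_eq_iff he hi hj).1 heq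
  rcases eq_or_six_mul_lt hsource hagree with rfl | ⟨hα, hβ⟩
  · rfl
  · rw [extensionValue_of_le hΓ hα.le, extensionValue_of_le hΓ hβ.le, hsource]

theorem extensionValue_eq_of_vertex_eq (hΓ : Γ.ClosesThirds) (he : IsFresh e Γ.verts) (h : Z → ℝ)
    (hi : 0 ≤ i) (hj : 0 ≤ j) (hi' : i ≤ α.length) (hj' : j ≤ β.length)
    (heq : vertex e α i = vertex e β j) : extensionValue h α i = extensionValue h β j := by
  rcases vertex_eq_or e α i with ⟨hα, -⟩ | ⟨hα, -⟩ <;>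
    rcases vertex_eq_or e β j with ⟨hβ, -⟩ | ⟨hβ, -⟩ <;> rw [hα, hβ] at heq <;>
    have hvalue := extensionValue_eq_of_prefixVertex_eq hΓ he h (by omega) (by omega) heq <;>
    simpa only [extensionValue_reverse hΓ] using hvalue

theorem extensionValue_eq_of_vertex_mem (hΓ : Γ.ClosesThirds) (he : IsFresh e Γ.verts)
    (h : Z → ℝ) (h₀ : 0 ≤ i) (h₁ : i ≤ α.length) (hmem : vertex e α i ∈ Γ.verts) :
    extensionValue h α i = h (vertex e α i) := by
  have hpos := Q.pos α.rel
  rcases eq_zero_or_eq_length_of_vertex_mem he h₀ h₁ hmem with rfl | rfl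
  · rw [vertex_zero hΓ he, extensionValue_of_le hΓ (by omega)]
  · rw [vertex_length hΓ he, ← extensionValue_reverse hΓ, sub_self,
      extensionValue_of_le hΓ (by simp only [reverse_period]; omega), reverse_source]

theorem abs_extensionValue_succ_sub_le (hΓ : Γ.ClosesThirds) (hh : Γ.IsLipschitz h)
    (α : MissingArc Γ) (i : ℤ) : |extensionValue h α (i + 1) - extensionValue h α i| ≤ 1 := by
  obtain ⟨ζ, htarget, hsource, hζ⟩ := α.exists_path
  have hends : |h α.source - h α.target| ≤ α.period - α.length := by
    rw [← htarget, ← hsource]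
    exact hh.abs_sub_le α.length_le hζ
  have hslope := α.ramp_slope_pos hΓ
  have hshort : (2 * α.period : ℝ) < 3 * α.length := by
    exact_mod_cast α.two_mul_period_lt hΓ
  rw [← Real.dist_eq, extensionValue, extensionValue, dist_lineMap_lineMap, Real.dist_eq,
    Real.dist_eq]
  calc |α.ramp (i + 1) - α.ramp i| * |h α.source - h α.target|
      ≤ 6 / (6 * α.length - 2 * α.period) * (α.period - α.length) := by
        gcongr
        exact abs_ramp_succ_sub_le hΓ α i
    _ ≤ 1 := by
        rw [div_mul_eq_mul_div, div_le_one hslope]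
        linarith

end MissingArc

namespace LabelledGraph

open MissingArc

theorem IsLipschitz.exists_extension (hΓ : Γ.ClosesThirds) (he : IsFresh e Γ.verts) {h : Z → ℝ}
    (hh : Γ.IsLipschitz h) :
    ∃ h' : Z → ℝ, (extension hΓ he).IsLipschitz h' ∧ Set.EqOn h' h Γ.verts := by
  let point : {p : MissingArc Γ × ℤ // 0 ≤ p.2 ∧ p.2 ≤ p.1.length} → Z :=
    fun p => vertex e p.1.1 p.1.2
  let value : {p : MissingArc Γ × ℤ // 0 ≤ p.2 ∧ p.2 ≤ p.1.length} → ℝ :=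
    fun p => extensionValue h p.1.1 p.1.2
  have hfactors : value.FactorsThrough point := fun p q =>
    extensionValue_eq_of_vertex_eq hΓ he h p.2.1 q.2.1 p.2.2 q.2.2
  let h' : Z → ℝ := Function.extend point value h
  have hvertex : ∀ α : MissingArc Γ, ∀ i, 0 ≤ i → i ≤ α.length →
      h' (vertex e α i) = extensionValue h α i := fun α i h₀ h₁ =>
    hfactors.extend_apply h ⟨(α, i), h₀, h₁⟩
  have hverts : Set.EqOn h' h Γ.verts := by
    intro v hv
    by_cases hex : ∃ p, point p = v
    · obtain ⟨p, rfl⟩ := hex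
      exact (hvertex p.1.1 p.1.2 p.2.1 p.2.2).trans
        (extensionValue_eq_of_vertex_mem hΓ he h p.2.1 p.2.2 hv)
    · exact Function.extend_apply' value h v hex
  refine ⟨h', ?_, hverts⟩
  rintro x a y (hedge | ⟨α, i, h₀, h₁, rfl, -, rfl⟩)
  · rw [hverts (Γ.left_mem hedge), hverts (right_mem hedge)]
    exact hh hedge
  · rw [hvertex α i h₀ h₁.le, hvertex α (i + 1) (by omega) (by omega)]
    exact abs_extensionValue_succ_sub_le hΓ hh α i

end LabelledGraph

end LipschitzExtension

section ExtensionClosesThirds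

variable {A : Type*} {Q : RelatorSystem A} {Z : Type*} {Γ : LabelledGraph Q Z}
  {e : Z → List A → Z}

namespace MissingArc

open LabelledGraph

variable {α β : MissingArc Γ} {i j : ℤ}

theorem agree_of_prefixVertex_eq (hΓ : Γ.ClosesThirds) (he : IsFresh e Γ.verts) (hi : 0 ≤ i)
    (hj : 0 ≤ j) (h : prefixVertex e α i = prefixVertex e β j) :
    i = j ∧ (∀ t, 0 ≤ t → t ≤ i → vertex e α t = vertex e β t) ∧
      (∀ t, 0 ≤ t → t < i → α.label t = β.label t) ∧ (β = α ∨ 6 * i < β.period) := by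
  obtain ⟨hsource, hij, hagree⟩ := (prefixVertex_eq_iff he hi hj).1 h
  rcases eq_or_six_mul_lt hsource hagree with rfl | ⟨hα, hβ⟩
  · exact ⟨hij, fun _ _ _ => rfl, fun _ _ _ => rfl, .inl rfl⟩
  · have := α.two_mul_period_lt hΓ
    have := β.two_mul_period_lt hΓ
    refine ⟨hij, fun t h₀ ht => ?_, hagree, .inr hβ⟩
    rw [vertex_of_lt (by omega), vertex_of_lt (by omega), prefixVertex_eq_iff he h₀ h₀]
    exact ⟨hsource, rfl, fun s hs hst => hagree s hs (by omega)⟩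

theorem label_eq_of_reverse_prefixVertex_eq (he : IsFresh e Γ.verts) (hi : i < α.length)
    (hj : j < β.length)
    (h : prefixVertex e α.reverse (α.length - i) = prefixVertex e β.reverse (β.length - j)) :
    α.label i = β.label j := by
  obtain ⟨-, hij, hagree⟩ := (prefixVertex_eq_iff he (by omega) (by omega)).1 h
  have hlabel := hagree (α.length - i - 1) (by omega) (by omega)
  rw [reverse_label, reverse_label, show α.length - 1 - (α.length - i - 1) = i by ring,
    show β.length - 1 - (α.length - i - 1) = j by omega] at hlabel
  exact Q.inv_injective hlabel

theorem six_mul_lt_of_reverse_prefixVertex_eq (he : IsFresh e Γ.verts) (hi : i ≤ α.length)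
    (hj : 0 ≤ j) (hturn : β.label j ≠ Q.inv (α.label (i - 1)))
    (h : prefixVertex e α.reverse (α.length - i) = prefixVertex e β j) :
    6 * (α.length - i) < α.period ∧ 6 * j < β.period := by
  obtain ⟨hsource, rfl, hagree⟩ := (prefixVertex_eq_iff he (by omega) hj).1 h
  refine (eq_or_six_mul_lt hsource hagree).resolve_left fun heq => hturn ?_
  rw [← heq, reverse_label]
  congr 2
  ring

/-- When a reduced path that has run along `α` continues along `β`, then either the arcs have been
the same so far, or they stay the same for one more step, or both are near an end. -/
theorem turn_cases (hΓ : Γ.ClosesThirds) (he : IsFresh e Γ.verts) (hi : 0 ≤ i) (hi' : i < α.length)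
    (hj : 0 ≤ j) (hj' : j < β.length) (h : vertex e α i = vertex e β j)
    (hturn : β.label j ≠ Q.inv (α.label (i - 1))) :
    (i = j ∧ (∀ t, 0 ≤ t → t ≤ i → vertex e α t = vertex e β t) ∧
      (∀ t, 0 ≤ t → t < i → α.label t = β.label t) ∧ (β = α ∨ 6 * i < β.period)) ∨
    (vertex e α (i + 1) = vertex e β (j + 1) ∧ α.label i = β.label j) ∨
    (6 * (α.length - i) < α.period ∧ 6 * j < β.period) := by
  have h' := h
  rcases vertex_eq_or e α i with ⟨hα, -⟩ | ⟨hα, -⟩ <;>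
    rcases vertex_eq_or e β j with ⟨hβ, -⟩ | ⟨hβ, -⟩ <;> rw [hα, hβ] at h'
  · exact .inl (agree_of_prefixVertex_eq hΓ he hi hj h')
  · refine (hturn ?_).elim
    rw [label_eq_inv_of_prefixVertex_eq he hi hj' h', Q.inv_inv]
  · exact .inr (.inr (six_mul_lt_of_reverse_prefixVertex_eq he hi'.le hj hturn h'))
  · have hlabel := label_eq_of_reverse_prefixVertex_eq he hi' hj' h'
    exact .inr (.inl ⟨vertex_succ_eq hΓ he hi hj hi' hj' h hlabel, hlabel⟩)

/-- Between the indices `j` and `k`, the sequence `ζ` with letters `g` runs along the arc `α`, the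
index `t` corresponding to the index `t + s` of the arc. -/
structure Follows (e : Z → List A → Z) (α : MissingArc Γ) (g : ℤ → A) (ζ : ℤ → Z) (s j k : ℤ) :
    Prop where
  nonneg : 0 ≤ j + s
  le_length : k + s ≤ α.length
  vertex_eq : ∀ t, j ≤ t → t ≤ k → ζ t = vertex e α (t + s)
  label_eq : ∀ t, j ≤ t → t < k → g t = α.label (t + s)

variable {g : ℤ → A} {ζ : ℤ → Z} {s k : ℤ}

theorem Follows.succ (h : α.Follows e g ζ s j k) (hk : k + s < α.length)
    (hvertex : ζ (k + 1) = vertex e α (k + 1 + s)) (hlabel : g k = α.label (k + s)) :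
    α.Follows e g ζ s j (k + 1) where
  nonneg := h.nonneg
  le_length := by omega
  vertex_eq t hj hk := by
    rcases hk.eq_or_lt with rfl | hlt
    · exact hvertex
    · exact h.vertex_eq t hj (by omega)
  label_eq t hj hk := by
    rcases (Int.lt_add_one_iff.1 hk).eq_or_lt with rfl | hlt
    · exact hlabel
    · exact h.label_eq t hj hlt

end MissingArc

namespace LabelledGraph

open MissingArc

/-- A path of the extension reading part of a relator that does not close up along it. -/
structure IsOpenPath (hΓ : Γ.ClosesThirds) (he : IsFresh e Γ.verts) (g : ℤ → A) (n a b : ℤ)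
    (ζ : ℤ → Z) : Prop where
  rel : Q.Rel g n
  isPath : (extension hΓ he).IsPath g a b ζ
  not_closedAt : ∀ j, a ≤ j → j ≤ b → ¬ (extension hΓ he).ClosedAt g n j (ζ j)

namespace IsOpenPath

variable {hΓ : Γ.ClosesThirds} {he : IsFresh e Γ.verts} {g : ℤ → A} {n a b j k s : ℤ} {ζ : ℤ → Z}
  {α : MissingArc Γ}

theorem notMem_verts (h : IsOpenPath hΓ he g n a b ζ) (hj : a ≤ j) (hj' : j ≤ b) :
    ζ j ∉ Γ.verts := by
  intro hmem
  have hclosed := (extension_closedAt hΓ he hmem (Q.shift h.rel j)).shift (-j)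
  simp only [neg_add_cancel_right, sub_neg_eq_add, zero_add] at hclosed
  exact h.not_closedAt j hj hj' hclosed

theorem exists_follows (h : IsOpenPath hΓ he g n a b ζ) (hj : a ≤ j) (hj' : j < b) :
    ∃ (α : MissingArc Γ) (s : ℤ), α.Follows e g ζ s j (j + 1) := by
  rcases h.isPath j hj hj' with hedge | ⟨α, i, h₀, h₁, hvertex, hlabel, hsucc⟩
  · exact (h.notMem_verts hj hj'.le (Γ.left_mem hedge)).elim
  · refine ⟨α, i - j, by omega, by omega, fun t ht ht' => ?_, fun t ht ht' => ?_⟩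
    · rcases (show t = j ∨ t = j + 1 by omega) with rfl | rfl
      · rw [← hvertex, add_sub_cancel]
      · rw [← hsucc]
        congr 1
        ring
    · obtain rfl : t = j := by omega
      rw [← hlabel, add_sub_cancel]

theorem six_mul_lt (h : IsOpenPath hΓ he g n a b ζ) (hα : α.Follows e g ζ s j k) (hj : a ≤ j)
    (hjk : j ≤ k) (hk : k ≤ b) : 6 * (k - j) < n ∧ 6 * (k - j) < α.period := by
  refine (Q.small (Q.shift h.rel j) (Q.shift α.rel (j + s)) (k - j) fun i h₀ h₁ => ?_).resolve_left
    fun ⟨hlabel, hperiod⟩ => h.not_closedAt j hj (hjk.trans hk) ?_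
  · rw [hα.label_eq (i + j) (by omega) (by omega), add_assoc]
  · have h₀ := hα.nonneg
    have h₁ := hα.le_length
    have hsource : (extension hΓ he).ClosedAt α.label α.period 0 (vertex e α 0) := by
      rw [vertex_zero hΓ he]
      exact closedAt_source hΓ he α
    have hclosed := (isPath_vertex hΓ he α).closedAt hsource le_rfl (by omega) h₀ (by omega)
    rw [← hα.vertex_eq j le_rfl hjk, ← hperiod] at hclosed
    have hshift := hclosed.shift (j + s)
    rw [← hlabel] at hshift
    simpa using hshift.shift (-j)

theorem extend_follows (h : IsOpenPath hΓ he g n a b ζ) (hα : α.Follows e g ζ s j k) (hj : a ≤ j)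
    (hjk : j < k) (hk : k < b) :
    (∃ β : MissingArc Γ, β.Follows e g ζ s j (k + 1) ∧ (β = α ∨ 6 * (j + s) < β.period)) ∨
    ∃ (β : MissingArc Γ) (t : ℤ), β.Follows e g ζ t k (k + 1) ∧
      6 * (α.length - (k + s)) < α.period ∧ 6 * (k + t) < β.period := by
  obtain ⟨β, t, hβ⟩ := h.exists_follows (hj.trans hjk.le) hk
  have h₀ := hα.nonneg
  have h₁ := hβ.nonneg
  have h₂ := hβ.le_length
  have hζα := hα.vertex_eq k hjk.le le_rfl
  have hζβ := hβ.vertex_eq k le_rfl (by omega)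
  have hζβ' := hβ.vertex_eq (k + 1) (by omega) le_rfl
  have hgβ := hβ.label_eq k le_rfl (by omega)
  have hlt : k + s < α.length := by
    refine hα.le_length.lt_of_ne fun heq => h.notMem_verts (hj.trans hjk.le) hk.le ?_
    rw [hζα, heq, vertex_length hΓ he]
    exact α.target_mem
  have hturn : β.label (k + t) ≠ Q.inv (α.label (k + s - 1)) := by
    have hred := Q.reduced h.rel (k - 1)
    rwa [sub_add_cancel, hgβ, hα.label_eq (k - 1) (by omega) (by omega),
      ← add_sub_right_comm] at hred
  rcases turn_cases hΓ he (by omega) hlt h₁ (by omega) (hζα.symm.trans hζβ) hturn with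
    ⟨hst, hvertex, hlabel, hβα⟩ | ⟨hvertex, hlabel⟩ | hends
  · obtain rfl : s = t := by omega
    refine .inl ⟨β, Follows.succ ⟨h₀, by omega, fun i hi hi' => ?_, fun i hi hi' => ?_⟩ (by omega)
      hζβ' hgβ, hβα.imp_right fun hβ => by omega⟩
    · rw [hα.vertex_eq i hi hi', hvertex _ (by omega) (by omega)]
    · rw [hα.label_eq i hi hi', hlabel _ (by omega) (by omega)]
  · refine .inl ⟨α, hα.succ hlt ?_ (hgβ.trans hlabel.symm), .inl rfl⟩
    rw [hζβ', add_right_comm, ← hvertex, add_right_comm]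
  · exact .inr ⟨β, t, hβ, hends⟩

/-- An open path runs along at most two arcs in succession: it could leave a second one only near
its far end, after reading more than a sixth of that arc's relator. -/
theorem exists_follows_or (h : IsOpenPath hΓ he g n a b ζ) (hk : a < k) (hk' : k ≤ b) :
    (∃ (α : MissingArc Γ) (s : ℤ), α.Follows e g ζ s a k) ∨
    ∃ (α β : MissingArc Γ) (s t j : ℤ), a ≤ j ∧ j < k ∧ α.Follows e g ζ s a j ∧
      β.Follows e g ζ t j k ∧ 6 * (j + t) < β.period := by
  induction k, (show a + 1 ≤ k from hk) using Int.leInduction with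
  | base => exact .inl (h.exists_follows le_rfl (by omega))
  | succ k hak ih =>
    rcases ih (by omega) (by omega) with ⟨α, s, hα⟩ | ⟨α, β, s, t, j, haj, hjk, hα, hβ, hstart⟩
    · rcases h.extend_follows hα le_rfl (by omega) (by omega) with
        ⟨β, hβ, -⟩ | ⟨β, t, hβ, -, hstart⟩
      · exact .inl ⟨β, s, hβ⟩
      · exact .inr ⟨α, β, s, t, k, by omega, by omega, hα, hβ, hstart⟩
    · rcases h.extend_follows hβ haj hjk (by omega) with ⟨γ, hγ, hγβ⟩ | ⟨γ, u, -, hend, -⟩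
      · refine .inr ⟨α, γ, s, t, j, haj, by omega, hα, hγ, ?_⟩
        rcases hγβ with rfl | hγ
        exacts [hstart, hγ]
      · have hshort := (h.six_mul_lt hβ haj hjk.le (by omega)).2
        have := β.two_mul_period_lt hΓ
        omega

theorem three_mul_lt (h : IsOpenPath hΓ he g n a b ζ) : 3 * (b - a) < n := by
  rcases le_or_gt b a with hba | hab
  · have := Q.pos h.rel
    omega
  rcases h.exists_follows_or hab le_rfl with ⟨α, s, hα⟩ | ⟨α, β, s, t, j, haj, hjb, hα, hβ, -⟩
  · have := (h.six_mul_lt hα le_rfl hab.le le_rfl).1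
    omega
  · have := (h.six_mul_lt hα le_rfl haj hjb.le).1
    have := (h.six_mul_lt hβ haj hjb.le le_rfl).1
    omega

end IsOpenPath

theorem extension_closesThirds (hΓ : Γ.ClosesThirds) (he : IsFresh e Γ.verts) :
    (extension hΓ he).ClosesThirds := by
  intro g n hr a b ζ hζ hn
  by_contra hopen
  have hpos := Q.pos hr
  have h : IsOpenPath hΓ he g n a b ζ := ⟨hr, hζ, fun j hj hj' hclosed =>
    hopen (hζ.closedAt hclosed hj hj' le_rfl (by omega))⟩
  exact absurd h.three_mul_lt (by omega)

end LabelledGraph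

end ExtensionClosesThirds

section Limit

theorem exists_seq_of_step {X : Type*} {P : ℕ → X → Prop} {r : ℕ → X → X → Prop} {x : X}
    (h₀ : P 0 x) (hstep : ∀ n x, P n x → ∃ y, P (n + 1) y ∧ r n x y) :
    ∃ u : ℕ → X, u 0 = x ∧ ∀ n, P n (u n) ∧ r n (u n) (u (n + 1)) := by
  choose next hnext hr using hstep
  let u : (n : ℕ) → {x // P n x} := fun n =>
    Nat.rec ⟨x, h₀⟩ (fun n x => ⟨next n x.1 x.2, hnext n x.1 x.2⟩) n
  exact ⟨fun n => (u n).1, rfl, fun n => ⟨(u n).2, hr n _ (u n).2⟩⟩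

variable {A : Type*} {Q : RelatorSystem A}

namespace LabelledGraph

section Union

variable {Z : Type*}

/-- Every relator closes up at every vertex. -/
def IsComplete (Γ : LabelledGraph Q Z) : Prop :=
  ∀ v ∈ Γ.verts, ∀ ⦃f : ℤ → A⦄ ⦃n : ℤ⦄, Q.Rel f n → Γ.ClosedAt f n 0 v

/-- The graph `Γ'` contains `Γ`, all relators close up in `Γ'` at the vertices of `Γ`, and functions
which are `1`-Lipschitz on `Γ` extend to functions which are `1`-Lipschitz on `Γ'`. -/
structure IsFilling (Γ Γ' : LabelledGraph Q Z) : Prop where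
  verts_subset : Γ.verts ⊆ Γ'.verts
  edge_le : Γ.Edge ≤ Γ'.Edge
  closedAt : ∀ v ∈ Γ.verts, ∀ ⦃f : ℤ → A⦄ ⦃n : ℤ⦄, Q.Rel f n → Γ'.ClosedAt f n 0 v
  exists_isLipschitz : ∀ h, Γ.IsLipschitz h → ∃ h', Γ'.IsLipschitz h' ∧ Set.EqOn h' h Γ.verts

theorem isFilling_extension {Γ : LabelledGraph Q Z} {e : Z → List A → Z} (hΓ : Γ.ClosesThirds)
    (he : IsFresh e Γ.verts) : IsFilling Γ (extension hΓ he) where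
  verts_subset v hv := ⟨v, hv, [], Set.mem_univ _, he.nil v hv⟩
  edge_le _ _ _ := Or.inl
  closedAt _ hv _ _ hr := extension_closedAt hΓ he hv hr
  exists_isLipschitz _ hh := hh.exists_extension hΓ he

theorem ClosedAt.mono {Γ Γ' : LabelledGraph Q Z} {f : ℤ → A} {n c : ℤ} {v : Z}
    (hedge : Γ.Edge ≤ Γ'.Edge) (h : Γ.ClosedAt f n c v) : Γ'.ClosedAt f n c v := by
  obtain ⟨ξ, hξ, hξc⟩ := h
  exact ⟨ξ, ⟨hξ.1, fun i => hedge _ _ _ (hξ.2 i)⟩, hξc⟩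

/-- The union of an increasing sequence of graphs. -/
def union (Γ : ℕ → LabelledGraph Q Z) (hΓ : Monotone fun n => (Γ n).Edge) : LabelledGraph Q Z where
  verts := ⋃ n, (Γ n).verts
  Edge x a y := ∃ n, (Γ n).Edge x a y
  left_mem := fun ⟨n, h⟩ => Set.mem_iUnion.2 ⟨n, (Γ n).left_mem h⟩
  symm := fun ⟨n, h⟩ => ⟨n, (Γ n).symm h⟩
  det := fun ⟨m, h⟩ ⟨n, h'⟩ => (Γ (max m n)).det (hΓ (le_max_left m n) _ _ _ h)
    (hΓ (le_max_right m n) _ _ _ h')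

variable {Γ : ℕ → LabelledGraph Q Z} (hΓ : ∀ n, IsFilling (Γ n) (Γ (n + 1)))
include hΓ

theorem exists_isLipschitz_union {h : Z → ℝ} (hh : (Γ 0).IsLipschitz h) :
    ∃ h', (∀ n, (Γ n).IsLipschitz h') ∧ Set.EqOn h' h (Γ 0).verts := by
  obtain ⟨k, hk₀, hk⟩ := exists_seq_of_step (P := fun n => (Γ n).IsLipschitz)
    (r := fun n h h' => Set.EqOn h' h (Γ n).verts) hh fun n => (hΓ n).exists_isLipschitz
  have hverts : Monotone fun n => (Γ n).verts :=
    monotone_nat_of_le_succ fun n => (hΓ n).verts_subset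
  have hconst : ∀ m n, m ≤ n → Set.EqOn (k n) (k m) (Γ m).verts := by
    intro m n hmn
    induction n, hmn using Nat.le_induction with
    | base => exact Set.eqOn_refl _ _
    | succ n hmn ih => exact ((hk n).2.mono (hverts hmn)).trans ih
  have hvalue : ∀ z, ∃ c, ∀ n, z ∈ (Γ n).verts → k n z = c := by
    intro z
    by_cases hz : ∃ m, z ∈ (Γ m).verts
    · obtain ⟨m, hm⟩ := hz
      refine ⟨k m z, fun n hn => ?_⟩
      rcases le_total m n with hmn | hnm
      · exact hconst m n hmn hm
      · exact (hconst n m hnm hn).symm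
    · exact ⟨0, fun n hn => (hz ⟨n, hn⟩).elim⟩
  choose h' hh' using hvalue
  refine ⟨h', fun n x a y hxy => ?_, fun z hz => ?_⟩
  · rw [← hh' x n ((Γ n).left_mem hxy), ← hh' y n (right_mem hxy)]
    exact (hk n).1 hxy
  · rw [← hh' z 0 hz, hk₀]

theorem exists_isComplete_of_isFilling : ∃ Γ' : LabelledGraph Q Z, Γ'.IsComplete ∧
    IsFilling (Γ 0) Γ' := by
  have hmono : Monotone fun n => (Γ n).Edge := monotone_nat_of_le_succ fun n => (hΓ n).edge_le
  have hle : ∀ n, (Γ n).Edge ≤ (union Γ hmono).Edge := fun n _ _ _ h => ⟨n, h⟩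
  have hcomplete : (union Γ hmono).IsComplete := by
    intro v hv f n hr
    obtain ⟨m, hm⟩ := Set.mem_iUnion.1 hv
    exact ((hΓ m).closedAt v hm hr).mono (hle (m + 1))
  have hverts : (Γ 0).verts ⊆ (union Γ hmono).verts :=
    Set.subset_iUnion (fun n => (Γ n).verts) 0
  refine ⟨union Γ hmono, hcomplete, hverts, hle 0, fun v hv => hcomplete v (hverts hv), ?_⟩
  intro h hh
  obtain ⟨h', hh', heq⟩ := exists_isLipschitz_union hΓ hh
  exact ⟨h', fun x a y ⟨n, hxy⟩ => hh' n hxy, heq⟩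

end Union

variable {B : Type*}

/-- The vertices available at the `n`-th stage of the construction. -/
def stageSet (B A : Type*) (n : ℕ) : Set (B × (ℕ → List A)) :=
  {z | ∀ i, n ≤ i → z.2 i = []}

theorem isFresh_update {n : ℕ} {V : Set (B × (ℕ → List A))} (hV : V ⊆ stageSet B A n) :
    IsFresh (fun z p => (z.1, Function.update z.2 n p)) V where
  nil v hv := Prod.ext rfl (by
    rw [← hV hv n le_rfl]
    exact Function.update_eq_self n v.2)
  inj v hv w hw p q h := by
    obtain ⟨hfst, hsnd⟩ := Prod.ext_iff.1 h
    refine ⟨Prod.ext hfst (funext fun i => ?_), by simpa using congrFun hsnd n⟩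
    rcases eq_or_ne i n with rfl | hi
    · rw [hV hv i le_rfl, hV hw i le_rfl]
    · simpa [hi] using congrFun hsnd i

theorem exists_isComplete (Γ : LabelledGraph Q (B × (ℕ → List A)))
    (hverts : Γ.verts ⊆ stageSet B A 0) (hΓ : Γ.ClosesThirds) :
    ∃ Γ' : LabelledGraph Q (B × (ℕ → List A)), Γ'.IsComplete ∧ IsFilling Γ Γ' := by
  obtain ⟨Δ, rfl, hΔ⟩ := exists_seq_of_step
    (P := fun n (Γ : LabelledGraph Q _) => Γ.verts ⊆ stageSet B A n ∧ Γ.ClosesThirds)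
    (r := fun _ => IsFilling) ⟨hverts, hΓ⟩ fun n Γ ⟨hverts, hΓ⟩ => by
      have he := isFresh_update hverts
      refine ⟨extension hΓ he, ⟨?_, extension_closesThirds hΓ he⟩, isFilling_extension hΓ he⟩
      rintro _ ⟨v, hv, p, -, rfl⟩ i hi
      exact (Function.update_of_ne (by omega) _ _).trans (hverts hv i (by omega))
  exact exists_isComplete_of_isFilling fun n => (hΔ n).2

end LabelledGraph

end Limit

section Cycle

variable {A : Type*} {Q : RelatorSystem A} {Z : Type*} {f g F : ℤ → A} {m n : ℤ} {ζ ξ : ℤ → Z}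

namespace LabelledGraph

section Traversal

variable {Γ : LabelledGraph Q Z}

theorem IsLoop.reverse (h : Γ.IsLoop f n ξ) (j : ℤ) :
    Γ.IsLoop (fun i => Q.inv (f (j - i))) n fun i => ξ (j + 1 - i) := by
  refine ⟨fun i => ?_, fun i => ?_⟩
  · simpa only [← sub_sub] using h.1.sub_eq (j + 1 - i)
  · simpa only [add_sub_add_right_eq_sub, sub_add_eq_add_sub] using Γ.symm (h.2 (j - i))

theorem closedAt_of_forall_edge (hF : Q.Rel F n) (hξ : Γ.IsLoop F n ξ)
    (hedge : ∀ i a y, Γ.Edge (ξ i) a y → a = F i ∨ a = Q.inv (F (i - 1)))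
    (hg : Q.Rel g m) {b : ℤ} (hζ : Γ.IsPath g 0 b ζ) (hb : m ≤ 3 * b) (hvertex : ζ 0 = ξ 0)
    (hlabel : g 0 = F 0) : Γ.ClosedAt g m 0 (ζ 0) := by
  have hm := Q.pos hg
  have hagree : ∀ d, 0 ≤ d → d ≤ b → ζ d = ξ d ∧ ∀ i, 0 ≤ i → i < d → g i = F i := by
    intro d hd
    induction d, hd using Int.leInduction with
    | base => exact fun _ => ⟨hvertex, fun i _ _ => by omega⟩
    | succ d hd ih =>
      intro hdb
      obtain ⟨hd_vertex, hd_label⟩ := ih (by omega)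
      have hnext := hζ d hd (by omega)
      rw [hd_vertex] at hnext
      have hgd : g d = F d := by
        rcases hd.eq_or_lt with rfl | hd'
        · exact hlabel
        · refine (hedge d _ _ hnext).resolve_right fun hback => Q.reduced hg (d - 1) ?_
          rw [sub_add_cancel, hback, hd_label (d - 1) (by omega) (by omega)]
      refine ⟨Γ.det (hgd ▸ hnext) (hξ.2 d), fun i hi hid => ?_⟩
      rcases (Int.lt_add_one_iff.1 hid).eq_or_lt with rfl | hid'
      · exact hgd
      · exact hd_label i hi hid'
  rcases Q.small hg hF b (hagree b (by omega) le_rfl).2 with ⟨rfl, rfl⟩ | ⟨hlt, -⟩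
  · exact ⟨ξ, hξ, hvertex.symm⟩
  · omega

end Traversal

/-- The cycle with vertices `ζ i` labelled by the relator `f`. -/
def cycleGraph (hr : Q.Rel f n) (hζ : ∀ i j, ζ i = ζ j ↔ i ≡ j [ZMOD n]) : LabelledGraph Q Z where
  verts := Set.range ζ
  Edge x a y := ∃ i, (x = ζ i ∧ a = f i ∧ y = ζ (i + 1)) ∨
    (x = ζ (i + 1) ∧ a = Q.inv (f i) ∧ y = ζ i)
  left_mem := by
    rintro x a y ⟨i, ⟨rfl, -⟩ | ⟨rfl, -⟩⟩ <;> exact Set.mem_range_self _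
  symm := by
    rintro x a y ⟨i, ⟨rfl, rfl, rfl⟩ | ⟨rfl, rfl, rfl⟩⟩
    · exact ⟨i, .inr ⟨rfl, rfl, rfl⟩⟩
    · exact ⟨i, .inl ⟨rfl, Q.inv_inv _, rfl⟩⟩
  det := by
    rintro x a y y' ⟨i, ⟨rfl, rfl, rfl⟩ | ⟨rfl, rfl, rfl⟩⟩ ⟨j, ⟨hx, ha, rfl⟩ | ⟨hx, ha, rfl⟩⟩
    · exact (hζ _ _).2 (((hζ _ _).1 hx).add_right 1)
    · refine (Q.reduced hr j ?_).elim
      rw [← ha, eq_of_periodic_of_modEq (Q.periodic hr) ((hζ _ _).1 hx)]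
    · refine (Q.reduced hr i ?_).elim
      rw [ha, eq_of_periodic_of_modEq (Q.periodic hr) ((hζ _ _).1 hx)]
    · exact (hζ _ _).2 (((hζ _ _).1 hx).add_right_cancel' 1)

variable (hr : Q.Rel f n) (hζ : ∀ i j, ζ i = ζ j ↔ i ≡ j [ZMOD n])

theorem isLoop_cycleGraph : (cycleGraph hr hζ).IsLoop f n ζ :=
  ⟨fun _ => (hζ _ _).2 (by simp), fun i => ⟨i, .inl ⟨rfl, rfl, rfl⟩⟩⟩

theorem eq_or_eq_of_cycleGraph_edge {i : ℤ} {a : A} {y : Z}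
    (h : (cycleGraph hr hζ).Edge (ζ i) a y) : a = f i ∨ a = Q.inv (f (i - 1)) := by
  obtain ⟨j, ⟨hj, rfl, -⟩ | ⟨hj, rfl, -⟩⟩ := h
  · exact .inl (eq_of_periodic_of_modEq (Q.periodic hr) ((hζ _ _).1 hj).symm)
  · refine .inr (congrArg Q.inv (eq_of_periodic_of_modEq (Q.periodic hr) ?_))
    simpa using ((hζ _ _).1 hj.symm).sub_right 1

theorem cycleGraph_closesThirds : (cycleGraph hr hζ).ClosesThirds := by
  intro g m hg a b ξ hξ hb
  have hm := Q.pos hg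
  have hpath : (cycleGraph hr hζ).IsPath (fun i => g (i + a)) 0 (b - a) fun i => ξ (i + a) := by
    intro i h₀ h₁
    simpa only [add_right_comm] using hξ (i + a) (by omega) (by omega)
  have hloop := isLoop_cycleGraph hr hζ
  suffices hclosed : (cycleGraph hr hζ).ClosedAt (fun i => g (i + a)) m 0 (ξ (0 + a)) by
    simpa using hclosed.shift (-a)
  obtain ⟨i, ⟨hi, ha, -⟩ | ⟨hi, ha, -⟩⟩ := hξ a le_rfl (by omega)
  · refine closedAt_of_forall_edge (Q.shift hr i) (hloop.shift i) (fun t c y h => ?_)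
      (Q.shift hg a) hpath hb (by simpa using hi) (by simpa using ha)
    simpa only [sub_add_eq_add_sub] using eq_or_eq_of_cycleGraph_edge hr hζ h
  · refine closedAt_of_forall_edge (Q.reverse hr i) (hloop.reverse i) (fun t c y h => ?_)
      (Q.shift hg a) hpath hb (by simpa using hi) (by simpa using ha)
    rw [Q.inv_inv, or_comm, show i - (t - 1) = i + 1 - t by ring,
      show i - t = i + 1 - t - 1 by ring]
    exact eq_or_eq_of_cycleGraph_edge hr hζ h

end LabelledGraph

theorem abs_natAbs_valMinAbs_add_one_sub_le {n : ℕ} [NeZero n] (x : ZMod n) :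
    |((x + 1).valMinAbs.natAbs : ℝ) - x.valMinAbs.natAbs| ≤ 1 := by
  have hle := ZMod.natAbs_min_of_le_div_two n _ (x.valMinAbs + 1) (by simp)
    (ZMod.natAbs_valMinAbs_le (x + 1))
  have hge := ZMod.natAbs_min_of_le_div_two n _ ((x + 1).valMinAbs - 1) (by simp)
    (ZMod.natAbs_valMinAbs_le x)
  have hint : |((x + 1).valMinAbs.natAbs : ℤ) - x.valMinAbs.natAbs| ≤ 1 := abs_le.2 (by omega)
  exact_mod_cast hint

theorem exists_isComplete_isLipschitz {n : ℕ} (hr : Q.Rel f n) :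
    ∃ (Γ : LabelledGraph Q (ZMod n × (ℕ → List A))) (ζ : ℤ → ZMod n × (ℕ → List A)),
      Γ.IsComplete ∧ (∀ i, Γ.Edge (ζ i) (f i) (ζ (i + 1))) ∧
      ∀ i : ℤ, ∃ h, Γ.IsLipschitz h ∧
        ∀ j : ℤ, h (ζ j) = (((j - i : ℤ) : ZMod n).valMinAbs.natAbs : ℝ) := by
  have : NeZero n := ⟨by rintro rfl; exact (Q.pos hr).ne rfl⟩
  let ζ : ℤ → ZMod n × (ℕ → List A) := fun i => (i, fun _ => [])
  have hζ : ∀ i j, ζ i = ζ j ↔ i ≡ j [ZMOD n] := fun i j => by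
    simp [ζ, Prod.ext_iff, ZMod.intCast_eq_intCast_iff]
  obtain ⟨Γ, hcomplete, hΓ⟩ := LabelledGraph.exists_isComplete (LabelledGraph.cycleGraph hr hζ)
    (by rintro _ ⟨i, rfl⟩ k -; rfl) (LabelledGraph.cycleGraph_closesThirds hr hζ)
  refine ⟨Γ, ζ, hcomplete, fun i => hΓ.edge_le _ _ _ ((LabelledGraph.isLoop_cycleGraph hr hζ).2 i),
    fun i => ?_⟩
  obtain ⟨h', hh', heq⟩ := hΓ.exists_isLipschitz (fun z => ((z.1 - i).valMinAbs.natAbs : ℝ)) (by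
    have hstep : ∀ t : ℤ, |((((ζ (t + 1)).1 - i).valMinAbs.natAbs : ℝ)) -
        ((ζ t).1 - i).valMinAbs.natAbs| ≤ 1 := fun t => by
      have := abs_natAbs_valMinAbs_add_one_sub_le ((t - i : ℤ) : ZMod n)
      simpa [ζ, sub_add_eq_add_sub] using this
    rintro x a y ⟨t, ⟨rfl, -, rfl⟩ | ⟨rfl, -, rfl⟩⟩
    · exact hstep t
    · rw [abs_sub_comm]
      exact hstep t)
  refine ⟨h', hh', fun j => ?_⟩
  rw [heq ⟨j, rfl⟩]
  simp [ζ]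

end Cycle

section Action

variable {A : Type*} {Q : RelatorSystem A} {Z : Type*} {Γ : LabelledGraph Q Z} {f : ℤ → A} {n : ℤ}

namespace LabelledGraph

open Classical in
/-- The source of the edge with label `a` and target `y`, or `y` itself if there is no such edge or
if no relator contains `a`; in a complete graph this is a bijection of `Z` for every `a`. -/
noncomputable def pred (Γ : LabelledGraph Q Z) (a : A) (y : Z) : Z :=
  if h : (∃ f n, Q.Rel f n ∧ f 0 = a) ∧ ∃ x, Γ.Edge x a y then h.2.choose else y

theorem pred_eq_of_edge (hr : Q.Rel f n) {i : ℤ} {x y : Z} (h : Γ.Edge x (f i) y) :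
    Γ.pred (f i) y = x := by
  have hpred : (∃ g m, Q.Rel g m ∧ g 0 = f i) ∧ ∃ x, Γ.Edge x (f i) y :=
    ⟨⟨_, n, Q.shift hr i, congrArg f (zero_add i)⟩, x, h⟩
  rw [pred, dif_pos hpred]
  exact codet hpred.2.choose_spec h

theorem pred_inv_pred (hΓ : Γ.IsComplete) (a : A) (y : Z) :
    Γ.pred (Q.inv a) (Γ.pred a y) = y := by
  by_cases h : (∃ f n, Q.Rel f n ∧ f 0 = a) ∧ ∃ x, Γ.Edge x a y
  · obtain ⟨⟨f, n, hr, rfl⟩, x, hx⟩ := h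
    rw [pred_eq_of_edge hr hx]
    exact pred_eq_of_edge (Q.reverse hr 0) (i := 0) (Γ.symm hx)
  · rw [pred.eq_def Γ a y, dif_neg h, pred, dif_neg]
    rintro ⟨⟨f, n, hr, hf⟩, x, hx⟩
    obtain ⟨z, hz⟩ := (hΓ y (right_mem hx) hr).exists_edge
    rw [hf] at hz
    refine h ⟨⟨_, n, Q.reverse hr 0, ?_⟩, z, edge_of_edge_inv hz⟩
    rw [sub_zero, hf, Q.inv_inv]

theorem pred_eq_self {y : Z} (hy : y ∉ Γ.verts) (a : A) : Γ.pred a y = y :=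
  dif_neg fun ⟨_, _, hx⟩ => hy (right_mem hx)

theorem abs_foldr_pred_sub_le {h : Z → ℝ} (hh : Γ.IsLipschitz h) (w : List A) (y : Z) :
    |h (w.foldr Γ.pred y) - h y| ≤ w.length := by
  induction w with
  | nil => simp
  | cons a w ih =>
    have hpred : |h (Γ.pred a (w.foldr Γ.pred y)) - h (w.foldr Γ.pred y)| ≤ 1 := by
      rw [pred]
      split_ifs with hx
      · rw [abs_sub_comm]
        exact hh hx.2.choose_spec
      · simp
    have htri := abs_sub_le (h (Γ.pred a (w.foldr Γ.pred y))) (h (w.foldr Γ.pred y)) (h y)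
    rw [List.foldr_cons, List.length_cons]
    push_cast
    linarith

theorem foldr_pred_word_of_isLoop (hr : Q.Rel f n) {ξ : ℤ → Z} (hξ : Γ.IsLoop f n ξ) (k : ℕ) :
    (word f k).foldr Γ.pred (ξ k) = ξ 0 := by
  induction k with
  | zero => rfl
  | succ k ih =>
    rw [word_succ, List.foldr_append, ← ih, List.foldr_cons, List.foldr_nil, Nat.cast_succ,
      pred_eq_of_edge hr (hξ.2 k)]

theorem foldr_pred_word {n : ℕ} (hΓ : Γ.IsComplete) (hr : Q.Rel f n) (y : Z) :
    (word f n).foldr Γ.pred y = y := by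
  by_cases hy : y ∈ Γ.verts
  · obtain ⟨ξ, hξ, rfl⟩ := hΓ y hy hr
    have hclose := foldr_pred_word_of_isLoop hr hξ n
    rwa [hξ.1.eq] at hclose
  · exact List.foldr_fixed' (pred_eq_self hy) _

end LabelledGraph

end Action

section Words

variable {S : Type*} {R : Set (Word S)}

theorem length_wordInv (w : Word S) : (wordInv w).length = w.length :=
  FreeGroup.invRev_length

theorem wordInv_wordInv (w : Word S) : wordInv (wordInv w) = w :=
  FreeGroup.invRev_invRev

theorem wordInv_rotate (w : Word S) (k : ℕ) :
    ∃ l, wordInv (w.rotate k) = (wordInv w).rotate l :=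
  ⟨_, by rw [wordInv, wordInv, List.map_rotate, List.reverse_rotate]⟩

theorem rotate_mem_symmClosure {w : Word S} (hw : w ∈ symmClosure R) (k : ℕ) :
    w.rotate k ∈ symmClosure R := by
  obtain ⟨r, hr, l, rfl | rfl⟩ := hw
  · exact ⟨r, hr, l + k, .inl (List.rotate_rotate ..)⟩
  · exact ⟨r, hr, l + k, .inr (List.rotate_rotate ..)⟩

theorem wordInv_mem_symmClosure {w : Word S} (hw : w ∈ symmClosure R) :
    wordInv w ∈ symmClosure R := by
  obtain ⟨r, hr, k, rfl | rfl⟩ := hw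
  · obtain ⟨l, hl⟩ := wordInv_rotate r k
    exact ⟨r, hr, l, .inr hl⟩
  · obtain ⟨l, hl⟩ := wordInv_rotate (wordInv r) k
    exact ⟨r, hr, l, .inl (by rw [hl, wordInv_wordInv])⟩

theorem ReducedWord.wordInv {w : Word S} (hw : ReducedWord w) : ReducedWord (wordInv w) := by
  refine List.isChain_reverse.2 ((List.isChain_map _).2 ?_)
  exact List.IsChain.imp (fun a b h hba => congrArg not (h hba.symm).symm) hw

theorem reducedWord_of_mem_symmClosure (hR : ∀ r ∈ R, CyclicallyReduced r) {w : Word S}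
    (hw : w ∈ symmClosure R) : ReducedWord w := by
  obtain ⟨r, hr, k, rfl | rfl⟩ := hw
  · exact hR r hr k
  · obtain ⟨l, hl⟩ := wordInv_rotate (wordInv r) k
    rw [← wordInv_wordInv ((wordInv r).rotate k), hl, wordInv_wordInv]
    exact (hR r hr l).wordInv

theorem word_prefix (f : ℤ → S × Bool) {m n : ℕ} (h : m ≤ n) : word f m <+: word f n := by
  obtain ⟨k, rfl⟩ := Nat.exists_eq_add_of_le h
  simp only [word, List.range_add, List.map_append, List.prefix_append]

theorem word_add_eq_rotate {f : ℤ → S × Bool} {n : ℕ} (hf : Function.Periodic f n) (k : ℕ) :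
    word (fun i => f (i + k)) n = (word f n).rotate k := by
  refine List.ext_getElem (by simp) fun i hi _ => ?_
  simp only [word, List.getElem_rotate, List.getElem_map, List.getElem_range, List.length_map,
    List.length_range]
  exact eq_of_periodic_of_modEq hf (by push_cast; exact (Int.mod_modEq ..).symm)

theorem exists_periodic_word_eq {w : Word S} (hw : w ≠ []) :
    ∃ f : ℤ → S × Bool, Function.Periodic f w.length ∧ word f w.length = w := by
  have hpos : (0 : ℤ) < w.length := by exact_mod_cast List.length_pos_of_ne_nil hw
  have hlt : ∀ i : ℤ, (i % w.length).toNat < w.length := fun i => by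
    have := Int.emod_lt_of_pos i hpos
    omega
  refine ⟨fun i => w[(i % w.length).toNat]'(hlt i), fun i => by simp,
    List.ext_getElem (by simp) fun i hi hi' => ?_⟩
  have hmod : ((i : ℤ) % w.length).toNat = i := by
    rw [Int.emod_eq_of_lt (by positivity) (by exact_mod_cast hi'), Int.toNat_natCast]
  simp only [word, List.getElem_map, List.getElem_range, hmod]

/-- `f` is the bi-infinite periodic sequence spelled by an element of length `n` of the symmetrised
set of relators. -/
def IsRelator (R : Set (Word S)) (f : ℤ → S × Bool) (n : ℤ) : Prop :=
  0 < n ∧ Function.Periodic f n ∧ word f n.toNat ∈ symmClosure R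

namespace IsRelator

variable {f g : ℤ → S × Bool} {m n : ℤ}

theorem shift (h : IsRelator R f n) (j : ℤ) : IsRelator R (fun i => f (i + j)) n := by
  obtain ⟨hn, hf, hmem⟩ := h
  lift n to ℕ using hn.le
  refine ⟨hn, fun i => by simpa only [add_right_comm] using hf (i + j), ?_⟩
  obtain ⟨k, hk⟩ := Int.eq_ofNat_of_zero_le (Int.emod_nonneg j hn.ne')
  have hshift : (fun i => f (i + j)) = fun i => f (i + k) := funext fun i =>
    eq_of_periodic_of_modEq hf (by rw [← hk]; exact (Int.mod_modEq j n).symm.add_left i)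
  rw [hshift]
  exact (word_add_eq_rotate hf k).symm ▸ rotate_mem_symmClosure hmem k

theorem reverse (h : IsRelator R f n) (j : ℤ) :
    IsRelator R (fun i => ((f (j - i)).1, !(f (j - i)).2)) n := by
  have hn := h.1
  lift n to ℕ using hn.le
  have hword : word (fun i => ((f (n - 1 - i)).1, !(f (n - 1 - i)).2)) n = wordInv (word f n) := by
    refine List.ext_getElem (by simp [length_wordInv]) fun i hi _ => ?_
    rw [length_word] at hi
    simp only [word, wordInv, List.getElem_map, List.getElem_range, List.getElem_reverse,
      List.length_map, List.length_range]
    rw [show (n : ℤ) - 1 - i = (n - 1 - i : ℕ) by omega]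
  have hrev : IsRelator R (fun i => ((f (n - 1 - i)).1, !(f (n - 1 - i)).2)) n :=
    ⟨hn, fun i => by simp only [← sub_sub, h.2.1.sub_eq], by
      simpa [hword] using wordInv_mem_symmClosure h.2.2⟩
  have hshift := hrev.shift (n - 1 - j)
  simp only [show ∀ i, (n : ℤ) - 1 - (i + (n - 1 - j)) = j - i from fun i => by ring] at hshift
  exact hshift

theorem reduced (hR : ∀ r ∈ R, CyclicallyReduced r) (h : IsRelator R f n) (i : ℤ) :
    f (i + 1) ≠ ((f i).1, !(f i).2) := by
  intro heq
  obtain ⟨hn, hf, hmem⟩ := h.shift i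
  lift n to ℕ using hn.le
  rcases (show 1 ≤ n by omega).eq_or_lt with rfl | hlt
  · rw [show i + 1 = i + (1 : ℕ) by simp, h.2.1] at heq
    simpa using congrArg Prod.snd heq
  · have hchain := List.isChain_iff_getElem.1 (reducedWord_of_mem_symmClosure hR hmem) 0
      (by simpa using hlt)
    simp [word, add_comm 1 i, heq] at hchain

theorem eq_of_word_eq (hf : IsRelator R f n) (hg : IsRelator R g m)
    (h : word f n.toNat = word g m.toNat) : f = g ∧ n = m := by
  obtain ⟨hn, hf, -⟩ := hf
  obtain ⟨hm, hg, -⟩ := hg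
  obtain ⟨hnm, hfg⟩ := word_eq_word_iff.1 h
  obtain rfl : n = m := by omega
  refine ⟨funext fun i => ?_, rfl⟩
  rw [← eq_of_periodic_of_modEq hf (Int.mod_modEq i n),
    ← eq_of_periodic_of_modEq hg (Int.mod_modEq i n)]
  have hlt := Int.emod_lt_of_pos i hn
  exact hfg _ (Int.emod_nonneg i hn.ne') (by omega)

theorem small (hsc : SmallCancellation R (1 / 6)) (hf : IsRelator R f n) (hg : IsRelator R g m)
    (l : ℤ) (hl : ∀ i, 0 ≤ i → i < l → f i = g i) :
    (f = g ∧ n = m) ∨ (6 * l < n ∧ 6 * l < m) := by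
  by_cases heq : word f n.toNat = word g m.toNat
  · exact .inl (hf.eq_of_word_eq hg heq)
  obtain ⟨hn, -, hf_mem⟩ := hf
  obtain ⟨hm, -, hg_mem⟩ := hg
  lift n to ℕ using hn.le
  lift m to ℕ using hm.le
  rcases le_or_gt l 0 with hl₀ | hl₀
  · exact .inr ⟨by omega, by omega⟩
  lift l to ℕ using hl₀.le
  obtain ⟨t, ht⟩ : ∃ t, t = min l (min n m) := ⟨_, rfl⟩
  have hfg : word f t = word g t := word_eq_word_iff.2 ⟨rfl, fun i h₀ hi => hl i h₀ (by omega)⟩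
  have hft : word f t <+: word f n := word_prefix f (by omega)
  have hgt : word f t <+: word g m := hfg ▸ word_prefix g (by omega)
  have hpiece : IsPiece R (word f t) :=
    ⟨by rw [← List.length_pos_iff, length_word]; omega, _, hf_mem, _, hg_mem, heq, hft, hgt⟩
  have hfn := hsc.2 _ hf_mem _ hpiece hft.isInfix
  have hgm := hsc.2 _ hg_mem _ hpiece hgt.isInfix
  simp only [length_word, Int.toNat_natCast] at hfn hgm
  have hn₆ : 6 * t < n := by exact_mod_cast (by linarith : (6 : ℝ) * t < n)
  have hm₆ : 6 * t < m := by exact_mod_cast (by linarith : (6 : ℝ) * t < m)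
  exact .inr ⟨by omega, by omega⟩

end IsRelator

/-- The relator system of a `C'(1/6)` set of words. -/
def relatorSystem (R : Set (Word S)) (hsc : SmallCancellation R (1 / 6)) :
    RelatorSystem (S × Bool) where
  inv a := (a.1, !a.2)
  inv_inv a := Prod.ext rfl (Bool.not_not a.2)
  Rel := IsRelator R
  pos h := h.1
  periodic h := h.2.1
  shift h := h.shift
  reverse h := h.reverse
  reduced h := h.reduced hsc.1
  small hf hg := hf.small hsc hg

end Words

section Evaluation

variable {S : Type*} {R : Set (Word S)} {G : Type*} [Group G] {σ : S → G}

theorem evalWord_eq_lift (σ : S → G) (w : Word S) :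
    evalWord σ w = FreeGroup.lift σ (FreeGroup.mk w) := by
  rw [FreeGroup.lift_mk, evalWord]
  congr 2 with a
  cases a.2 <;> rfl

theorem evalWord_append (σ : S → G) (v w : Word S) :
    evalWord σ (v ++ w) = evalWord σ v * evalWord σ w := by
  simp [evalWord]

theorem evalWord_wordInv (σ : S → G) (w : Word S) :
    evalWord σ (wordInv w) = (evalWord σ w)⁻¹ := by
  rw [evalWord_eq_lift, evalWord_eq_lift, ← map_inv, FreeGroup.inv_mk]
  rfl

theorem evalWord_eq_one_of_mem_symmClosure (hσ : ∀ r ∈ R, evalWord σ r = 1) {w : Word S}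
    (hw : w ∈ symmClosure R) : evalWord σ w = 1 := by
  obtain ⟨r, hr, k, rfl | rfl⟩ := hw <;> rw [evalWord, List.map_rotate]
  · exact List.prod_rotate_eq_one_of_prod_eq_one (hσ r hr) k
  · refine List.prod_rotate_eq_one_of_prod_eq_one ?_ k
    exact (evalWord_wordInv σ r).trans (by rw [hσ r hr, inv_one])

theorem exists_isRelator_prefix {r w : Word S} (hr : r ∈ R) (hr₀ : r ≠ []) (hw : w <:+: r) :
    ∃ f, IsRelator R f r.length ∧ w <+: word f r.length := by
  obtain ⟨u, v, rfl⟩ := hw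
  have hrot : (u ++ w ++ v).rotate u.length = w ++ v ++ u := by
    rw [List.append_assoc, List.rotate_append_length_eq]
  obtain ⟨f, hf, hword⟩ := exists_periodic_word_eq (w := (u ++ w ++ v).rotate u.length)
    (by rwa [Ne, List.rotate_eq_nil_iff])
  rw [List.length_rotate] at hf hword
  refine ⟨f, ⟨by exact_mod_cast List.length_pos_of_ne_nil hr₀, hf, ?_⟩, ?_⟩
  · rw [Int.toNat_natCast, hword]
    exact ⟨_, hr, _, .inl rfl⟩
  · rw [hword, hrot, List.append_assoc]
    exact List.prefix_append ..

end Evaluation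
section CayleyGraph

variable {S : Type*} {R : Set (Word S)} {G : Type*} [Group G] {σ : S → G}

/-- The Cayley graph of `G` with respect to `σ`, as a labelled graph. -/
def cayleyGraph (hsc : SmallCancellation R (1 / 6)) (σ : S → G) :
    LabelledGraph (relatorSystem R hsc) G where
  verts := Set.univ
  Edge x a y := x * evalWord σ [a] = y
  left_mem _ := Set.mem_univ _
  symm {x a y} h := by
    rw [← h]
    exact (congrArg (x * evalWord σ [a] * ·) (evalWord_wordInv σ [a])).trans
      (mul_inv_cancel_right _ _)
  det h h' := h.symm.trans h'

variable {hsc : SmallCancellation R (1 / 6)} {f : ℤ → S × Bool} {n : ℤ}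

theorem isPath_cayleyGraph_word (g : G) (m : ℤ) :
    (cayleyGraph hsc σ).IsPath f 0 m fun i => g * evalWord σ (word f i.toNat) := by
  intro i hi _
  lift i to ℕ using hi
  change g * evalWord σ (word f i) * evalWord σ [f i] = g * evalWord σ (word f (i + 1))
  rw [word_succ, evalWord_append, mul_assoc]

theorem isComplete_cayleyGraph (hσ : ∀ r ∈ R, evalWord σ r = 1) :
    (cayleyGraph hsc σ).IsComplete := by
  intro g _ f n hr
  have hn : g * evalWord σ (word f n.toNat) = g := by
    rw [evalWord_eq_one_of_mem_symmClosure hσ hr.2.2, mul_one]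
  have h₀ : g * evalWord σ (word f (0 : ℤ).toNat) = g := mul_one g
  have hpath : (cayleyGraph hsc σ).IsPath f 0 n _ := isPath_cayleyGraph_word g n
  simpa only [h₀] using hpath.closedAt_of_eq hr.1 hr.2.1 (hn.trans h₀.symm)

theorem mul_evalWord_word_of_isLoop {ξ : ℤ → G} (hξ : (cayleyGraph hsc σ).IsLoop f n ξ) (k : ℕ) :
    ξ 0 * evalWord σ (word f k) = ξ k := by
  induction k with
  | zero => simp [word, evalWord]
  | succ k ih =>
    rw [word_succ, evalWord_append, ← mul_assoc, ih]
    exact hξ.2 k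

theorem exists_mul_evalWord_of_isLoop {ξ : ℤ → G} (hξ : (cayleyGraph hsc σ).IsLoop f n ξ)
    (i j : ℤ) : ∃ w : Word S, w.length = (j - i).natAbs ∧ ξ i * evalWord σ w = ξ j := by
  wlog hij : i ≤ j generalizing i j
  · obtain ⟨w, hw, h⟩ := this j i (by omega)
    exact ⟨wordInv w, by rw [length_wordInv, hw]; omega,
      by rw [evalWord_wordInv, ← h, mul_inv_cancel_right]⟩
  have hword := mul_evalWord_word_of_isLoop (hξ.shift i) (j - i).toNat
  refine ⟨_, ?_, by simpa [Int.toNat_of_nonneg (sub_nonneg.2 hij)] using hword⟩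
  rw [length_word]
  omega

theorem map_evalWord {H : Type*} [Group H] (φ : G →* H) (σ : S → G) (w : Word S) :
    φ (evalWord σ w) = evalWord (φ ∘ σ) w := by
  rw [evalWord, evalWord, map_list_prod, List.map_map]
  congr 2 with a
  cases h : a.2 <;> simp [h]

namespace LabelledGraph

variable {Z : Type*} {Γ : LabelledGraph (relatorSystem R hsc) Z}

/-- The permutation of the vertices by which the generator `s` acts: words act from the left, by
reading them backwards. -/
noncomputable def genPerm (Γ : LabelledGraph (relatorSystem R hsc) Z) (hΓ : Γ.IsComplete) (s : S) :
    Equiv.Perm Z where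
  toFun := Γ.pred (s, true)
  invFun := Γ.pred (s, false)
  left_inv := pred_inv_pred hΓ (s, true)
  right_inv := pred_inv_pred hΓ (s, false)

theorem evalWord_genPerm_apply (hΓ : Γ.IsComplete) (w : Word S) (x : Z) :
    evalWord (Γ.genPerm hΓ) w x = w.foldr Γ.pred x := by
  induction w with
  | nil => rfl
  | cons a w ih =>
    rw [List.foldr_cons, ← ih]
    obtain ⟨s, _ | _⟩ := a <;> rfl

theorem evalWord_genPerm_of_mem (hΓ : Γ.IsComplete) {r : Word S} (hr : r ∈ R) :
    evalWord (Γ.genPerm hΓ) r = 1 := by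
  ext x
  rw [evalWord_genPerm_apply]
  rcases eq_or_ne r [] with rfl | hr₀
  · rfl
  obtain ⟨f, hf, hw⟩ := exists_isRelator_prefix hr hr₀ List.infix_rfl
  rw [hw.eq_of_length (length_word f _).symm]
  exact foldr_pred_word hΓ hf x

theorem map_apply_eq_of_isLoop (hΓ : Γ.IsComplete) {φ : G →* Equiv.Perm Z}
    (hφ : φ ∘ σ = Γ.genPerm hΓ) (hr : IsRelator R f n) {ξ : ℤ → G}
    (hξ : (cayleyGraph hsc σ).IsLoop f n ξ) {ζ : ℤ → Z}
    (hζ : ∀ i, Γ.Edge (ζ i) (f i) (ζ (i + 1))) (i j : ℤ) : φ (ξ i) (ζ i) = φ (ξ j) (ζ j) := by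
  have hstep : Function.Periodic (fun i => φ (ξ i) (ζ i)) 1 := fun i => by
    have hi : ξ i * evalWord σ [f i] = ξ (i + 1) := hξ.2 i
    simp only [← hi, map_mul, map_evalWord, hφ, Equiv.Perm.mul_apply, evalWord_genPerm_apply,
      List.foldr_cons, List.foldr_nil]
    rw [pred_eq_of_edge (Q := relatorSystem R hsc) hr (hζ i)]
  exact eq_of_periodic_of_modEq hstep Int.modEq_one

end LabelledGraph

theorem evalWord_presGen_of_mem {r : Word S} (hr : r ∈ R) : evalWord (presGen R) r = 1 := by
  have hmk : evalWord (presGen R) r = PresentedGroup.mk (FreeGroup.mk '' R) (FreeGroup.mk r) := by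
    rw [evalWord_eq_lift]
    exact DFunLike.congr_fun (FreeGroup.ext_hom _ _ fun s => FreeGroup.lift_apply_of) _
  exact hmk.trans (PresentedGroup.one_of_mem ⟨r, hr, rfl⟩)

theorem natAbs_valMinAbs_le_length (hsc : SmallCancellation R (1 / 6)) {n : ℕ}
    (hr : IsRelator R f n) {ξ : ℤ → PresentedGroup (FreeGroup.mk '' R)}
    (hξ : (cayleyGraph hsc (presGen R)).IsLoop f n ξ) {i j : ℤ} {w : Word S}
    (hw : ξ i * evalWord (presGen R) w = ξ j) :
    ((j - i : ℤ) : ZMod n).valMinAbs.natAbs ≤ w.length := by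
  obtain ⟨Γ, ζ, hΓ, hζ, hdist⟩ := exists_isComplete_isLipschitz (Q := relatorSystem R hsc) hr
  obtain ⟨h, hh, hhζ⟩ := hdist i
  have hrel : ∀ x ∈ FreeGroup.mk '' R, FreeGroup.lift (Γ.genPerm hΓ) x = 1 := by
    rintro _ ⟨r, hr, rfl⟩
    exact (evalWord_eq_lift _ r).symm.trans (LabelledGraph.evalWord_genPerm_of_mem hΓ hr)
  have hφ : PresentedGroup.toGroup hrel ∘ presGen R = Γ.genPerm hΓ :=
    funext fun s => PresentedGroup.toGroup.of hrel
  have hζw : ζ i = w.foldr Γ.pred (ζ j) := by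
    apply (PresentedGroup.toGroup hrel (ξ i)).injective
    rw [LabelledGraph.map_apply_eq_of_isLoop hΓ hφ hr hξ hζ i j, ← hw, map_mul, map_evalWord, hφ,
      Equiv.Perm.mul_apply, LabelledGraph.evalWord_genPerm_apply]
  have hlip := LabelledGraph.abs_foldr_pred_sub_le hh w (ζ j)
  rw [← hζw, hhζ, hhζ, sub_self, Int.cast_zero, ZMod.valMinAbs_zero, Int.natAbs_zero, Nat.cast_zero,
    zero_sub, abs_neg, Nat.abs_cast] at hlip
  exact_mod_cast hlip

end CayleyGraph
section IsometricCycles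

theorem natAbs_valMinAbs_intCast {n : ℕ} {d : ℤ} (hd : |d| ≤ n) :
    ((d : ZMod n).valMinAbs.natAbs : ℤ) = min |d| (n - |d|) := by
  wlog hd₀ : 0 ≤ d generalizing d
  · have hneg := this (d := -d) (by rwa [abs_neg]) (by omega)
    rwa [abs_neg, Int.cast_neg, ZMod.natAbs_valMinAbs_neg] at hneg
  lift d to ℕ using hd₀
  rw [Nat.abs_cast] at hd ⊢
  rcases (show d ≤ n by exact_mod_cast hd).eq_or_lt with rfl | hlt
  · simp
  have : NeZero n := ⟨by omega⟩
  rw [ZMod.valMinAbs_natAbs_eq_min, Int.cast_natCast, ZMod.val_natCast_of_lt hlt]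
  omega

variable {G : Type*} [Group G] {S : Type*} {σ : S → G} {M : ℝ → ℝ} {Q : ℝ}

theorem wordDist_eq_of_forall {g h : G} {d : ℕ}
    (hd : ∃ w : Word S, w.length = d ∧ g * evalWord σ w = h)
    (hle : ∀ w : Word S, g * evalWord σ w = h → d ≤ w.length) : wordDist σ g h = d := by
  refine (Nat.sInf_le hd).antisymm (le_csInf ⟨d, hd⟩ ?_)
  rintro _ ⟨w, rfl, hw⟩
  exact hle w hw

/-- `c` is an isometric embedding of the cycle of length `n` in the Cayley graph. -/
structure IsIsometricCycle (σ : S → G) (n : ℕ) (c : ℤ → G) : Prop where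
  periodic : Function.Periodic c n
  wordDist_eq (i j : ℤ) :
    wordDist σ (c i) (c j) = ((j - i : ℤ) : ZMod n).valMinAbs.natAbs

namespace IsIsometricCycle

variable {n : ℕ} {c : ℤ → G} {m : ℤ}

theorem wordDist_eq_min (hc : IsIsometricCycle σ n c) {i j : ℤ} (hij : |j - i| ≤ n) :
    (wordDist σ (c i) (c j) : ℤ) = min |j - i| (n - |j - i|) := by
  rw [hc.wordDist_eq, natAbs_valMinAbs_intCast hij]

theorem comp_neg (hc : IsIsometricCycle σ n c) : IsIsometricCycle σ n fun i => c (-i) where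
  periodic i := by simp only [neg_add', hc.periodic.sub_eq]
  wordDist_eq i j := by
    rw [hc.wordDist_eq, ← ZMod.natAbs_valMinAbs_neg, ← Int.cast_neg]
    ring_nf

theorem dGeodesicOn (hc : IsIsometricCycle σ n c) (hm : 2 * m ≤ n) :
    DGeodesicOn σ (Set.Icc 0 m) c := by
  rintro i ⟨hi, him⟩ j ⟨hj, hjm⟩
  have hij : |j - i| ≤ m := abs_le.2 ⟨by omega, by omega⟩
  rw [hc.wordDist_eq_min (by omega), min_eq_left (by omega)]

/-- If `d` is the distance of the parameters of two points, then their distance is `d` or `n - d`,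
and the latter is at least `m` because `d ≤ n - m`. -/
theorem dQGeoOn (hc : IsIsometricCycle σ n c) (hQ : 1 ≤ Q) (hm₀ : 0 ≤ m) (hm : n / Q - Q ≤ m) :
    DQGeoOn σ Q (Set.Icc 0 (n - m)) c := by
  refine ⟨fun i hi hi' => ?_, ?_⟩
  · have hnext := hc.wordDist_eq_min (i := i) (j := i + 1)
    rw [add_sub_cancel_left, abs_one] at hnext
    have := hi.1
    have := hi'.2
    omega
  rintro i ⟨hi, him⟩ j ⟨hj, hjm⟩
  have hd₀ : 0 ≤ |j - i| := abs_nonneg _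
  have hdm : |j - i| ≤ n - m := abs_le.2 ⟨by omega, by omega⟩
  have hdist := hc.wordDist_eq_min (i := i) (j := j) (by omega)
  rw [show |(j : ℝ) - i| = (|j - i| : ℤ) by push_cast; rfl]
  generalize |j - i| = d at *
  generalize wordDist σ (c i) (c j) = e at *
  have hd₀' : (0 : ℝ) ≤ d := by exact_mod_cast hd₀
  have hupper : (e : ℝ) ≤ d := by exact_mod_cast (show (e : ℤ) ≤ d by omega)
  refine ⟨?_, by nlinarith⟩
  rcases (show e = d ∨ m ≤ e by omega) with he | he
  · have he' : (e : ℝ) = d := by exact_mod_cast he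
    linarith [div_le_self hd₀' hQ]
  · have hdn : (d : ℝ) ≤ n := by exact_mod_cast (show d ≤ n by omega)
    have hme : (m : ℝ) ≤ e := by exact_mod_cast he
    linarith [div_le_div_of_nonneg_right hdn (zero_le_one.trans hQ)]

/-- The complementary arc joins the endpoints of a Morse arc, and its midpoint is far from it. -/
theorem length_le_of_dMorseOn (hc : IsIsometricCycle σ n c) (hQ : 1 ≤ Q) (hm₀ : 0 ≤ m)
    (hmn : 2 * m ≤ n) (hm : n / Q - Q ≤ m) (hM : DMorseOn σ M (Set.Icc 0 m) c) :
    (n : ℝ) ≤ 4 * M Q + 2 := by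
  have hend : c (-(n - m)) = c m := by rw [neg_sub, hc.periodic.sub_eq]
  obtain ⟨v, ⟨hv, hvm⟩, hle⟩ := hM Q hQ 0 ⟨le_rfl, hm₀⟩ m ⟨hm₀, le_rfl⟩ hm₀ (fun i => c (-i))
    0 (n - m) (by omega) (hc.comp_neg.dQGeoOn hQ hm₀ hm) (congrArg c neg_zero) hend
    ((n - m) / 2) ⟨by omega, by omega⟩
  have hgap : |v - -((n - m) / 2)| = v + (n - m) / 2 := by
    rw [sub_neg_eq_add, abs_of_nonneg (by omega)]
  have hdist := hc.wordDist_eq_min (i := -((n - m) / 2)) (j := v) (by omega)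
  have hn : (n : ℤ) ≤ 4 * (wordDist σ (c (-((n - m) / 2))) (c v) : ℤ) + 2 := by omega
  have hn' : (n : ℝ) ≤ 4 * wordDist σ (c (-((n - m) / 2))) (c v) + 2 := by exact_mod_cast hn
  linarith

end IsIsometricCycle

theorem isIsometricCycle_of_isLoop {R : Set (Word S)} {hsc : SmallCancellation R (1 / 6)}
    {f : ℤ → S × Bool} {n : ℕ} (hr : IsRelator R f n)
    {ξ : ℤ → PresentedGroup (FreeGroup.mk '' R)}
    (hξ : (cayleyGraph hsc (presGen R)).IsLoop f n ξ) : IsIsometricCycle (presGen R) n ξ where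
  periodic := hξ.1
  wordDist_eq i j := by
    obtain ⟨w, hw, heval⟩ :=
      exists_mul_evalWord_of_isLoop hξ i (i + ((j - i : ℤ) : ZMod n).valMinAbs)
    have hmod : i + ((j - i : ℤ) : ZMod n).valMinAbs ≡ j [ZMOD n] := by
      rw [← ZMod.intCast_eq_intCast_iff]
      simp
    rw [eq_of_periodic_of_modEq hξ.1 hmod] at heval
    rw [add_sub_cancel_left] at hw
    exact wordDist_eq_of_forall ⟨w, hw, heval⟩ fun _ => natAbs_valMinAbs_le_length hsc hr hξ

theorem exists_isIsometricCycle_eqOn_pathOfWord {R : Set (Word S)}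
    (hsc : SmallCancellation R (1 / 6)) {r w : Word S} (hr : r ∈ R) (hr₀ : r ≠ []) (hw : w <:+: r)
    (g : PresentedGroup (FreeGroup.mk '' R)) :
    ∃ c, IsIsometricCycle (presGen R) r.length c ∧
      Set.EqOn (pathOfWord (presGen R) g w) c (Set.Icc 0 w.length) := by
  obtain ⟨f, hf, hwf⟩ := exists_isRelator_prefix hr hr₀ hw
  obtain ⟨ξ, hξ, rfl⟩ := isComplete_cayleyGraph (hsc := hsc)
    (fun _ => evalWord_presGen_of_mem) g (Set.mem_univ g) hf
  refine ⟨ξ, isIsometricCycle_of_isLoop hf hξ, ?_⟩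
  rintro i ⟨hi, hiw⟩
  lift i to ℕ using hi
  have hiw' : i ≤ w.length := by exact_mod_cast hiw
  have hlen : (w.take i).length = (word f i).length := by simp [hiw']
  have htake : w.take i = word f i := (List.prefix_of_prefix_length_le
    ((List.take_prefix i w).trans hwf) (word_prefix f (hiw'.trans hw.length_le))
    hlen.le).eq_of_length hlen
  rw [pathOfWord, Int.toNat_natCast, htake, mul_evalWord_word_of_isLoop hξ]

theorem DMorseOn.congr {p q : ℤ → G} {a b : ℤ} (h : DMorseOn σ M (Set.Icc a b) p)
    (hpq : Set.EqOn p q (Set.Icc a b)) : DMorseOn σ M (Set.Icc a b) q := by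
  intro Q hQ s hs t ht hst γ u v huv hγ hγu hγv n hn
  obtain ⟨m, hm, hle⟩ := h Q hQ s hs t ht hst γ u v huv hγ (hγu.trans (hpq hs).symm)
    (hγv.trans (hpq ht).symm) n hn
  exact ⟨m, hm, hpq ⟨hs.1.trans hm.1, hm.2.trans ht.2⟩ ▸ hle⟩

theorem DLocMorseOn.mono {p : ℤ → G} {L : ℝ} {I J : Set ℤ} (h : DLocMorseOn σ M L I p)
    (hJI : J ⊆ I) : DLocMorseOn σ M L J p :=
  fun s hs t ht => h s (hJI hs) t (hJI ht)

end IsometricCycles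
theorem div_sub_le_min {n k : ℕ} {N : ℝ} (hN : 0 < N) (hk : n / N ≤ k) :
    n / max N 2 - max N 2 ≤ (min (k : ℤ) (n / 2) : ℤ) := by
  have hN' : (n : ℝ) / max N 2 ≤ n / N := by gcongr; exact le_max_left N 2
  have h₂ : (n : ℝ) / max N 2 ≤ n / 2 := by gcongr; exact le_max_right N 2
  have hmax : (2 : ℝ) ≤ max N 2 := le_max_right N 2
  rcases min_choice (k : ℤ) (n / 2) with hmin | hmin <;> rw [hmin]
  · push_cast
    linarith
  · have hfloor : (n : ℝ) ≤ 2 * ((n / 2 : ℤ) : ℝ) + 1 := by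
      exact_mod_cast (show (n : ℤ) ≤ 2 * (n / 2) + 1 by omega)
    linarith

end MorseLTG

open MorseLTG in
theorem stmt7_general {S : Type*} (R : Set (Word S)) (hsc : SmallCancellation R (1 / 6))
    (hgmltg : CayGeodesicMLTG (presGen R)) (M : ℝ → ℝ) (hM : IsMorseGauge M) :
    ∃ L : ℝ, 0 < L ∧ ∀ N : ℝ, 0 < N → ∃ D : ℝ,
      ∀ r ∈ R, ∀ w : Word S, w <:+: r → r.length / N ≤ w.length →
        (∃ g : PresentedGroup (FreeGroup.mk '' R),
            DLocMorseOn (presGen R) M L (Set.Icc 0 (w.length : ℤ))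
              (pathOfWord (presGen R) g w)) →
        (r.length : ℝ) ≤ D := by
  obtain ⟨L, M', hL, hM', hltg⟩ := hgmltg M hM
  refine ⟨L, hL, fun N hN => ⟨4 * M' (max N 2) + 2, ?_⟩⟩
  rintro r hr w hw hlen ⟨g, hloc⟩
  have hQ : (1 : ℝ) ≤ max N 2 := one_le_two.trans (le_max_right N 2)
  rcases eq_or_ne r [] with rfl | hr₀
  · have := hM'.2.2 _ hQ
    simp only [List.length_nil, Nat.cast_zero]
    positivity
  obtain ⟨c, hc, hpc⟩ := exists_isIsometricCycle_eqOn_pathOfWord hsc hr hr₀ hw g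
  obtain ⟨m, hm⟩ : ∃ m : ℤ, m = min (w.length : ℤ) (r.length / 2) := ⟨_, rfl⟩
  have hIcc : Set.Icc 0 m ⊆ Set.Icc 0 (w.length : ℤ) := Set.Icc_subset_Icc_right (by omega)
  have hgeo : DGeodesicOn (presGen R) (Set.Icc 0 m) (pathOfWord (presGen R) g w) :=
    fun i hi j hj => by
      rw [hpc (hIcc hi), hpc (hIcc hj)]
      exact hc.dGeodesicOn (by omega) i hi j hj
  have hmorse := (hltg _ Set.ordConnected_Icc _ hgeo (hloc.mono hIcc)).congr (hpc.mono hIcc)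
  exact hc.length_le_of_dMorseOn hQ (by omega) (by omega) (hm ▸ div_sub_le_min hN hlen) hmorse

open MorseLTG in
/-- in a `C'(1/6)` group satisfying the geodesic MLTG property,
there is a scale `L` such that relators containing an `L`-locally `M`-Morse
subword making up at least a `1/N` fraction of the relator have bounded length. -/
theorem stmt7 {S : Type*} [Fintype S] (R : Set (Word S))
    (hsc : SmallCancellation R (1 / 6))
    (hgmltg : CayGeodesicMLTG (presGen R))
    (M : ℝ → ℝ) (hM : IsMorseGauge M) :
    ∃ L : ℝ, 0 < L ∧ ∀ N : ℕ, 2 ≤ N → ∃ D : ℝ,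
      ∀ r ∈ R, ∀ w : Word S, w <:+: r → (r.length : ℝ) / N ≤ (w.length : ℝ) →
        (∃ g : PresentedGroup (FreeGroup.mk '' R),
            DLocMorseOn (presGen R) M L (Set.Icc 0 (w.length : ℤ))
              (pathOfWord (presGen R) g w)) →
        (r.length : ℝ) ≤ D := by
  obtain ⟨L, hL, hbound⟩ := stmt7_general R hsc hgmltg M hM
  exact ⟨L, hL, fun N hN => hbound N (Nat.cast_pos.2 (two_pos.trans_le hN))⟩
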